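/- arXiv:1504.03227 — 3 statements merged into one kernel-verified Lean document; each statement's English description precedes it below -/
import Mathlib

section
/- For any prime p ≥ 3 and any integer r ≥ 1, the sum of 1/(ijk) over all triples (i,j,k) of positive integers with i+j+k = p^r and each of i,j,k coprime to p is congruent to -2·p^{r-1}·B_{p-3} modulo p^r, where B_n denotes the n-th Bernoulli number. -/
/-- `x ≡ y (mod p^r)` as p-integral rationals. -/
def ratCong (p r : ℕ) (x y : ℚ) : Prop :=
  ∃ z : ℚ, x - y = (p : ℚ) ^ r * z ∧ ¬ (p ∣ z.den)

/-- Sum of `1/(l₁⋯lₙ)` over positive `n`-tuples summing to `N` with each `lᵢ` coprime to `p`. -/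
def hsum (p n N : ℕ) : ℚ :=
  ∑ l ∈ (Fintype.piFinset fun _ : Fin n => Finset.Icc 1 N) |>.filter
      (fun l => ∑ i, l i = N ∧ ∀ i, ¬ p ∣ l i),
    ∏ i, (1 : ℚ) / l i

/-!
Let `T M N` be the sum of `1 / (xyz)` over the triples with sum `N` and entries below `M` and prime
to `p`, so that `T M M` is the sum in question for `M = p ^ r`.

Lifting. Write a triple with sum `p * M` as `x + M * a`, where `x` has entries below `M`. Then `x`
has sum `M` or `2 * M`, and correspondingly `a` has sum `p - 1` or `p - 2`. Modulo `p * M` the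
inverse `1 / (x i + M * a i)` is affine in `a i`. Both numbers of digit vectors `a`, namely
`(p + 1).choose 2` and `p.choose 2`, are divisible by `p`; by symmetry so is the sum of each
coordinate of `a`, unless `p = 3`, when instead `∑ i, 1 / x i ≡ ∑ i, x i ≡ 0`. Hence the first
order terms disappear and `T (pM) (pM) ≡ p * ((p + 1) / 2 * T M M + (p - 1) / 2 * T M (2 * M))`. The
reflection `x ↦ M - x` gives `T M (2 * M) ≡ -T M M` modulo `M`, so `T (pM) (pM) ≡ p * T M M`.

Residue modulo `p`. From `x + y + z = p` we get `1 / (xyz) ≡ -(1 / x + 1 / y) / z ^ 2`, so with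
`n = x + y` the sum is `-2 * ∑ n < p, n⁻² * ∑ x < n, x⁻¹`. As `x⁻¹ ≡ x ^ (p - 2)`, Faulhaber's
formula expands the inner sum in powers of `n` with Bernoulli coefficients, and the power sums over
`𝔽_p` keep only the coefficient of `n ^ 2`, which is `-B_{p-3}`.
-/

open Finset
open scoped Ring

lemma pos_of_not_dvd {p n : ℕ} (h : ¬p ∣ n) : 0 < n :=
  Nat.pos_of_ne_zero fun h0 => h (h0 ▸ dvd_zero p)

/-- A commutative ring is `p`-local if the natural numbers prime to `p` are units in it. The
argument runs simultaneously in `ℚ`, `ℤ_[p]`, `ZMod p` and quotients of `ℤ_[p]`. -/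
def IsPLocal (p : ℕ) (R : Type*) [CommRing R] : Prop :=
  ∀ n : ℕ, ¬p ∣ n → IsUnit (n : R)

section PLocal

variable {R S : Type*} [CommRing R] [CommRing S]

lemma IsPLocal.map {p : ℕ} (hR : IsPLocal p R) (f : R →+* S) : IsPLocal p S := fun n hn => by
  simpa only [map_natCast] using (hR n hn).map f

lemma isPLocal_of_charZero {K : Type*} [Field K] [CharZero K] : IsPLocal p K := fun _ hn =>
  isUnit_iff_ne_zero.2 (Nat.cast_ne_zero.2 (pos_of_not_dvd hn).ne')

lemma isPLocal_zmod {p : ℕ} [Fact p.Prime] : IsPLocal p (ZMod p) := fun n hn =>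
  isUnit_iff_ne_zero.2 <| by rwa [Ne, ZMod.natCast_eq_zero_iff]

lemma isPLocal_padicInt {p : ℕ} [Fact p.Prime] : IsPLocal p ℤ_[p] := fun n hn => by
  rw [PadicInt.isUnit_iff, PadicInt.norm_natCast_eq_one_iff]
  exact (Fact.out : p.Prime).coprime_iff_not_dvd.2 hn

lemma ringInverse_eq_of_mul_eq_one {a b : R} (h : a * b = 1) : a⁻¹ʳ = b :=
  Ring.inverse_unit (Units.mkOfMulEqOne a b h)

lemma map_ringInverse {a : R} (ha : IsUnit a) (f : R →+* S) : f a⁻¹ʳ = (f a)⁻¹ʳ := by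
  refine (ringInverse_eq_of_mul_eq_one ?_).symm
  rw [← map_mul, Ring.mul_inverse_cancel a ha, map_one]

lemma ringInverse_neg {a : R} (ha : IsUnit a) : (-a)⁻¹ʳ = -a⁻¹ʳ :=
  ringInverse_eq_of_mul_eq_one <| by rw [neg_mul_neg, Ring.mul_inverse_cancel a ha]

lemma ringInverse_add_of_sq_eq_zero {a e : R} (ha : IsUnit a) (he : e ^ 2 = 0) :
    (a + e)⁻¹ʳ = a⁻¹ʳ * (1 - e * a⁻¹ʳ) := by
  refine ringInverse_eq_of_mul_eq_one ?_
  linear_combination (1 - e * a⁻¹ʳ) * Ring.mul_inverse_cancel a ha - a⁻¹ʳ ^ 2 * he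

lemma prod_one_sub_mul_of_sq_eq_zero {ι : Type*} {e : R} (he : e ^ 2 = 0) (s : Finset ι)
    (y : ι → R) : ∏ i ∈ s, (1 - e * y i) = 1 - e * ∑ i ∈ s, y i := by
  classical
  induction s using Finset.induction with
  | empty => simp
  | insert i s hi ih =>
    rw [prod_insert hi, sum_insert hi, ih]
    linear_combination y i * (∑ j ∈ s, y j) * he

end PLocal

section Expansion

variable {p : ℕ} {R : Type*} [CommRing R] {ι : Type*} [Fintype ι]

lemma prod_ringInverse_add_mul (hR : IsPLocal p R) {m : R} (hm : m ^ 2 = 0) {x : ι → ℕ}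
    (hx : ∀ i, ¬p ∣ x i) (a : ι → ℕ) :
    ∏ i, ((x i : R) + m * a i)⁻¹ʳ =
      (∏ i, (x i : R)⁻¹ʳ) * (1 - m * ∑ i, a i * (x i : R)⁻¹ʳ) := by
  rw [← prod_one_sub_mul_of_sq_eq_zero hm, ← prod_mul_distrib]
  refine prod_congr rfl fun i _ => ?_
  rw [ringInverse_add_of_sq_eq_zero (hR _ (hx i)) (by rw [mul_pow, hm, zero_mul]), mul_assoc]

lemma mul_ringInverse_eq_mul_pow (hp : p.Prime) (hR : IsPLocal p R) {m : R} (hm : p * m = 0)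
    {n : ℕ} (hn : ¬p ∣ n) : m * (n : R)⁻¹ʳ = m * n ^ (p - 2) := by
  have fermat : (p : ℤ) ∣ n ^ (p - 1) - 1 :=
    (Int.ModEq.pow_card_sub_one_eq_one hp
      (Nat.isCoprime_iff_coprime.2 (hp.coprime_iff_not_dvd.2 hn).symm)).symm.dvd
  obtain ⟨c, hc⟩ := fermat
  have hc : (n : R) ^ (p - 2) * n - 1 = p * c := by
    rw [← pow_succ, show p - 2 + 1 = p - 1 by have := hp.two_le; lia]
    exact_mod_cast congrArg (Int.cast : ℤ → R) hc
  linear_combination m * n ^ (p - 2) * Ring.mul_inverse_cancel _ (hR n hn) -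
    m * (n : R)⁻¹ʳ * hc - c * (n : R)⁻¹ʳ * hm

lemma mul_sum_ringInverse_eq_zero_of_three (hR : IsPLocal 3 R) {m : R} (hm : 3 * m = 0)
    {x : ι → ℕ} (hx : ∀ i, ¬3 ∣ x i) (hsum : 3 ∣ ∑ i, x i) :
    m * ∑ i, (x i : R)⁻¹ʳ = 0 := by
  obtain ⟨c, hc⟩ := hsum
  calc m * ∑ i, (x i : R)⁻¹ʳ = m * (∑ i, x i : ℕ) := by
        rw [mul_sum, Nat.cast_sum, mul_sum]
        refine sum_congr rfl fun i _ => ?_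
        rw [mul_ringInverse_eq_mul_pow Nat.prime_three hR (mod_cast hm) (hx i), pow_one]
    _ = 0 := by
        rw [hc]
        push_cast
        linear_combination c * hm

end Expansion

section WeakCompositions

variable {ι : Type*} [Fintype ι] [DecidableEq ι]

lemma sum_piAntidiag_comp {A : Type*} [AddCommMonoid A] (σ : Equiv.Perm ι) (t : ℕ)
    (f : (ι → ℕ) → A) :
    ∑ a ∈ piAntidiag (univ : Finset ι) t, f (a ∘ σ) = ∑ a ∈ piAntidiag univ t, f a := by
  refine sum_equiv (σ.symm.arrowCongr (Equiv.refl ℕ)) (fun a => ?_) fun a _ => rfl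
  have hsum : ∑ k, σ.symm.arrowCongr (Equiv.refl ℕ) a k = ∑ k, a k := Equiv.sum_comp σ a
  simp only [mem_piAntidiag, hsum, mem_univ, implies_true]

lemma sum_piAntidiag_apply_eq (t : ℕ) (i j : ι) :
    ∑ a ∈ piAntidiag (univ : Finset ι) t, a i = ∑ a ∈ piAntidiag (univ : Finset ι) t, a j := by
  simpa using sum_piAntidiag_comp (Equiv.swap i j) t fun a => a j

lemma card_mul_sum_piAntidiag_apply (t : ℕ) (i : ι) :
    Fintype.card ι * ∑ a ∈ piAntidiag (univ : Finset ι) t, a i =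
      t * #(piAntidiag (univ : Finset ι) t) := by
  calc Fintype.card ι * ∑ a ∈ piAntidiag (univ : Finset ι) t, a i
      = ∑ j, ∑ a ∈ piAntidiag (univ : Finset ι) t, a j := by
        simp only [sum_piAntidiag_apply_eq t _ i, sum_const, card_univ, smul_eq_mul]
    _ = ∑ a ∈ piAntidiag (univ : Finset ι) t, ∑ j, a j := sum_comm
    _ = t * #(piAntidiag (univ : Finset ι) t) := by
        rw [sum_const_nat fun a ha => (mem_piAntidiag.1 ha).1, mul_comm]

lemma card_piAntidiag_univ (t : ℕ) :
    #(piAntidiag (univ : Finset ι) t) = (Fintype.card ι).multichoose t := by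
  rw [← map_sym_eq_piAntidiag, card_map, sym_univ, card_univ, Sym.card_sym_eq_multichoose]

lemma two_mul_choose_add_two (t : ℕ) : 2 * (t + 2).choose t = (t + 2) * (t + 1) := by
  rw [Nat.choose_symm_add, mul_comm, ← Nat.add_one_mul_choose_eq, Nat.choose_one_right]

lemma card_piAntidiag_fin_three (t : ℕ) :
    #(piAntidiag (univ : Finset (Fin 3)) t) = (t + 2).choose t := by
  rw [card_piAntidiag_univ, Fintype.card_fin, Nat.multichoose_eq, show 3 + t - 1 = t + 2 by lia]

end WeakCompositions

/-- The tuples of natural numbers prime to `p`, indexed by `ι`, with sum `N` and all entries below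
`M`. The bound `M` is kept apart from `N` because the tuples of residues mod `M` of tuples with sum
`d * M` have as sum an arbitrary multiple of `M`. -/
def coprimeTuples (p : ℕ) (ι : Type*) [Fintype ι] [DecidableEq ι] (M N : ℕ) : Finset (ι → ℕ) :=
  {l ∈ piAntidiag univ N | ∀ i, l i < M ∧ ¬p ∣ l i}

/-- The sum of `1 / ∏ i, l i` over the tuples `l` of `coprimeTuples p ι M N`, in a ring `R`. The
junk value `0` of `Ring.inverse` at non-units does not occur when `R` is `p`-local. -/
noncomputable def reciprocalSum (R : Type*) [CommRing R] (p : ℕ) (ι : Type*) [Fintype ι]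
    [DecidableEq ι] (M N : ℕ) : R :=
  ∑ l ∈ coprimeTuples p ι M N, ∏ i, (l i : R)⁻¹ʳ

section CoprimeTuples

variable {p M N : ℕ} {ι : Type*} [Fintype ι] [DecidableEq ι] {l : ι → ℕ}

lemma mem_coprimeTuples :
    l ∈ coprimeTuples p ι M N ↔ ∑ i, l i = N ∧ ∀ i, l i < M ∧ ¬p ∣ l i := by
  simp [coprimeTuples]

lemma mem_coprimeTuples_self (hN : p ∣ N) :
    l ∈ coprimeTuples p ι N N ↔ ∑ i, l i = N ∧ ∀ i, ¬p ∣ l i := by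
  refine mem_coprimeTuples.trans (and_congr_right fun hl => forall_congr' fun i => ?_)
  refine and_iff_right_of_imp fun hi => lt_of_le_of_ne ?_ fun h => hi (h ▸ hN)
  exact hl ▸ single_le_sum_of_canonicallyOrdered (mem_univ i)

lemma sum_coprimeTuples_comp {A : Type*} [AddCommMonoid A] (σ : Equiv.Perm ι)
    (f : (ι → ℕ) → A) :
    ∑ l ∈ coprimeTuples p ι M N, f (l ∘ σ) = ∑ l ∈ coprimeTuples p ι M N, f l := by
  rw [coprimeTuples, sum_filter, sum_filter,
    ← sum_piAntidiag_comp σ N fun l => if ∀ i, l i < M ∧ ¬p ∣ l i then f l else 0]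
  exact sum_congr rfl fun l _ => if_congr
    (σ.forall_congr_right (q := fun i => l i < M ∧ ¬p ∣ l i)).symm rfl rfl

lemma hsum_eq_reciprocalSum (n : ℕ) (hN : p ∣ N) :
    hsum p n N = reciprocalSum ℚ p (Fin n) N N := by
  refine sum_congr ?_ fun l _ => prod_congr rfl fun i _ => by
    rw [one_div, Ring.inverse_eq_inv]
  ext l
  simp only [mem_filter, Fintype.mem_piFinset, mem_Icc, mem_coprimeTuples_self hN,
    and_iff_right_iff_imp]
  rintro ⟨hl, hp⟩ i
  exact ⟨pos_of_not_dvd (hp i), hl ▸ single_le_sum_of_canonicallyOrdered (mem_univ i)⟩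

lemma map_reciprocalSum {R S : Type*} [CommRing R] [CommRing S] (hR : IsPLocal p R) (f : R →+* S) :
    f (reciprocalSum R p ι M N) = reciprocalSum S p ι M N := by
  rw [reciprocalSum, map_sum]
  refine sum_congr rfl fun l hl => ?_
  rw [map_prod]
  refine prod_congr rfl fun i _ => ?_
  rw [map_ringInverse (hR _ ((mem_coprimeTuples.1 hl).2 i).2), map_natCast]

lemma sub_mem_coprimeTuples (hM : p ∣ M) {N' : ℕ} (hN : N + N' = Fintype.card ι * M)
    (hl : l ∈ coprimeTuples p ι M N) : (fun i => M - l i) ∈ coprimeTuples p ι M N' := by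
  obtain ⟨hsum, hl⟩ := mem_coprimeTuples.1 hl
  refine mem_coprimeTuples.2 ⟨?_, fun i => ⟨?_, ?_⟩⟩
  · have : ∑ i, (M - l i) + ∑ i, l i = Fintype.card ι * M := by
      simp [← sum_add_distrib, fun i => Nat.sub_add_cancel (hl i).1.le]
    lia
  · exact Nat.sub_lt (by have := (hl i).1; lia) (pos_of_not_dvd (hl i).2)
  · rw [Nat.dvd_sub_iff_right (hl i).1.le hM]
    exact (hl i).2

lemma reciprocalSum_reflect {R : Type*} [CommRing R] (hR : IsPLocal p R) (hM : p ∣ M)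
    (hMR : (M : R) = 0) {N' : ℕ} (hN : N + N' = Fintype.card ι * M) :
    reciprocalSum R p ι M N' = (-1) ^ Fintype.card ι * reciprocalSum R p ι M N := by
  have sub_sub_cancel : ∀ {N : ℕ}, ∀ l ∈ coprimeTuples p ι M N, (fun i => M - (M - l i)) = l :=
    fun l hl => funext fun i => Nat.sub_sub_self ((mem_coprimeTuples.1 hl).2 i).1.le
  rw [reciprocalSum, reciprocalSum, mul_sum]
  refine sum_nbij' (fun l i => M - l i) (fun l i => M - l i) (fun l hl => ?_)
    (fun l => sub_mem_coprimeTuples hM hN) sub_sub_cancel sub_sub_cancel fun l hl => ?_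
  · exact sub_mem_coprimeTuples hM ((add_comm _ _).trans hN) hl
  have hl := (mem_coprimeTuples.1 hl).2
  rw [← card_univ, ← prod_const, ← prod_mul_distrib]
  refine prod_congr rfl fun i _ => ?_
  rw [Nat.cast_sub (hl i).1.le, hMR, zero_sub, ringInverse_neg (hR _ (hl i).2), neg_one_mul,
    neg_neg]

lemma coprimeTuples_mul_eq_empty {s : ℕ} [Nonempty ι] (hs : s = 0 ∨ Fintype.card ι ≤ s) :
    coprimeTuples p ι M (s * M) = ∅ := by
  refine eq_empty_of_forall_notMem fun l hl => ?_
  obtain ⟨hsum, hl⟩ := mem_coprimeTuples.1 hl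
  have hpos : 0 < ∑ i, l i := sum_pos (fun i _ => pos_of_not_dvd (hl i).2) univ_nonempty
  have hlt : ∑ i, l i < Fintype.card ι * M := by
    simpa using sum_lt_sum_of_nonempty univ_nonempty fun i _ => (hl i).1
  rcases hs with rfl | hs
  · lia
  · exact (hlt.trans_le (Nat.mul_le_mul_right M hs)).ne hsum

lemma sum_coprimeTuples_fin_three_eq_sum_range {A : Type*} [AddCommMonoid A] (f : ℕ → ℕ → A)
    (hf : ∀ n, f n 0 = 0) :
    ∑ l ∈ coprimeTuples p (Fin 3) p p, f (p - l 2) (l 0) = ∑ n ∈ range p, ∑ x ∈ range n, f n x := by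
  simp only [sum_sigma']
  refine sum_of_injOn (fun l => ⟨p - l 2, l 0⟩) (fun l hl l' hl' h => ?_) (fun l hl => ?_) ?_
    fun _ _ => rfl
  · have hl := mem_coprimeTuples.1 hl
    have hl' := mem_coprimeTuples.1 hl'
    rw [Fin.sum_univ_three] at hl hl'
    have := (hl.2 2).1
    have := (hl'.2 2).1
    simp only [Sigma.mk.injEq, heq_eq_eq] at h
    funext i
    fin_cases i <;> simp <;> lia
  · have hl := mem_coprimeTuples.1 hl
    rw [Fin.sum_univ_three] at hl
    have := pos_of_not_dvd (hl.2 1).2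
    have := pos_of_not_dvd (hl.2 2).2
    simp only [coe_sigma, Set.mem_sigma_iff, mem_coe, mem_range]
    lia
  · rintro ⟨n, x⟩ hnx hnot
    simp only [mem_sigma, mem_range] at hnx
    suffices x = 0 by rw [this, hf]
    by_contra hx
    refine hnot ⟨![x, n - x, p - n], mem_coprimeTuples.2 ⟨?_, fun i => ?_⟩, ?_⟩
    · simp [Fin.sum_univ_three]
      lia
    · have hi : 0 < ![x, n - x, p - n] i ∧ ![x, n - x, p - n] i < p := by
        fin_cases i <;> simp <;> lia
      exact ⟨hi.2, Nat.not_dvd_of_pos_of_lt hi.1 hi.2⟩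
    · simp
      lia

end CoprimeTuples

section Lift

variable {p M : ℕ} {ι : Type*} [Fintype ι] [DecidableEq ι]

lemma sum_coprimeTuples_mul {A : Type*} [AddCommMonoid A] (hM : p ∣ M) (hM0 : 0 < M) (d : ℕ)
    (f : (ι → ℕ) → A) :
    ∑ l ∈ coprimeTuples p ι (d * M) (d * M), f l =
      ∑ st ∈ antidiagonal d, ∑ x ∈ coprimeTuples p ι M (st.1 * M),
        ∑ a ∈ piAntidiag univ st.2, f fun i => x i + M * a i := by
  have dvd_mod {n : ℕ} : p ∣ n % M ↔ p ∣ n := Nat.dvd_mod_iff hM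
  simp only [sum_sigma']
  refine sum_nbij'
    (fun l => ⟨(d - ∑ i, l i / M, ∑ i, l i / M), fun i => l i % M, fun i => l i / M⟩)
    (fun y i => y.2.1 i + M * y.2.2 i) (fun l hl => ?_) ?_ (fun l _ => ?_) ?_ fun l _ => ?_
  · obtain ⟨hsum, hl⟩ := (mem_coprimeTuples_self (hM.mul_left d)).1 hl
    have hdiv : ∑ i, l i % M + M * ∑ i, l i / M = d * M := by
      rw [mul_sum, ← sum_add_distrib, ← hsum]
      exact sum_congr rfl fun i _ => Nat.mod_add_div _ _
    have hle : ∑ i, l i / M ≤ d := Nat.le_of_mul_le_mul_right (by lia) hM0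
    simp only [mem_sigma, HasAntidiagonal.mem_antidiagonal, mem_coprimeTuples, mem_piAntidiag,
      dvd_mod]
    refine ⟨Nat.sub_add_cancel hle, ⟨?_, fun i => ⟨Nat.mod_lt _ hM0, hl i⟩⟩, trivial,
      fun _ _ => mem_univ _⟩
    rw [Nat.sub_mul]
    lia
  · rintro ⟨⟨s, t⟩, x, a⟩ h
    simp only [mem_sigma, HasAntidiagonal.mem_antidiagonal, mem_coprimeTuples, mem_piAntidiag] at h
    obtain ⟨hst, ⟨hx, hxp⟩, ha, -⟩ := h
    refine (mem_coprimeTuples_self (hM.mul_left d)).2 ⟨?_, fun i => ?_⟩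
    · rw [sum_add_distrib, ← mul_sum, hx, ha, ← hst]
      ring
    · rw [← Nat.dvd_add_iff_left (hM.mul_right _)]
      exact (hxp i).2
  · exact funext fun i => Nat.mod_add_div _ _
  · rintro ⟨⟨s, t⟩, x, a⟩ h
    simp only [mem_sigma, HasAntidiagonal.mem_antidiagonal, mem_coprimeTuples, mem_piAntidiag] at h
    obtain ⟨hst, ⟨-, hx⟩, ha, -⟩ := h
    have hdiv i : (x i + M * a i) / M = a i := by
      rw [Nat.add_mul_div_left _ _ hM0, Nat.div_eq_of_lt (hx i).1, zero_add]
    have hmod i : (x i + M * a i) % M = x i := by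
      rw [Nat.add_mul_mod_self_left, Nat.mod_eq_of_lt (hx i).1]
    simp only [hdiv, hmod, ha, ← hst, Nat.add_sub_cancel]
  · simp only [Nat.mod_add_div]

variable {R : Type*} [CommRing R]

lemma mul_sum_sum_piAntidiag_eq_zero (hp : p.Prime) (hR : IsPLocal p R) {m : R}
    (hm : p * m = 0) (hι : p = 3 ∨ ¬p ∣ Fintype.card ι) {t : ℕ}
    (ht : p ∣ #(piAntidiag (univ : Finset ι) t)) {x : ι → ℕ} (hx : ∀ i, ¬p ∣ x i)
    (hsum : p ∣ ∑ i, x i) :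
    m * ∑ a ∈ piAntidiag univ t, ∑ i, a i * (x i : R)⁻¹ʳ = 0 := by
  rw [sum_comm, mul_sum]
  rcases isEmpty_or_nonempty ι with hι' | ⟨⟨i₀⟩⟩
  · simp
  set α := ∑ a ∈ piAntidiag univ t, a i₀ with hα
  have hterm : m * ∑ i, ∑ a ∈ piAntidiag univ t, a i * (x i : R)⁻¹ʳ =
      α * (m * ∑ i, (x i : R)⁻¹ʳ) := by
    simp only [← sum_mul, ← Nat.cast_sum, sum_piAntidiag_apply_eq t _ i₀, ← mul_sum, ← hα]
    ring
  rw [← mul_sum, hterm]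
  rcases hι with rfl | hι
  · rw [mul_sum_ringInverse_eq_zero_of_three hR (mod_cast hm) hx hsum, mul_zero]
  · obtain ⟨c, hc⟩ : p ∣ α := (hp.coprime_iff_not_dvd.2 hι).dvd_of_dvd_mul_left <| by
      rw [card_mul_sum_piAntidiag_apply]
      exact ht.mul_left t
    rw [hc]
    push_cast
    linear_combination (c * ∑ i, (x i : R)⁻¹ʳ) * hm

lemma sum_prod_ringInverse_add_mul (hp : p.Prime) (hR : IsPLocal p R) (hM : p ∣ M)
    (hMR : p * (M : R) = 0) (hι : p = 3 ∨ ¬p ∣ Fintype.card ι) {t : ℕ}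
    (ht : p ∣ #(piAntidiag (univ : Finset ι) t)) {x : ι → ℕ} (hx : ∀ i, ¬p ∣ x i)
    (hsum : p ∣ ∑ i, x i) :
    ∑ a ∈ piAntidiag univ t, ∏ i, ((x i + M * a i : ℕ) : R)⁻¹ʳ =
      #(piAntidiag (univ : Finset ι) t) * ∏ i, (x i : R)⁻¹ʳ := by
  have hsq : (M : R) ^ 2 = 0 := by
    obtain ⟨c, rfl⟩ := hM
    push_cast at hMR ⊢
    linear_combination c * hMR
  simp only [Nat.cast_add, Nat.cast_mul, prod_ringInverse_add_mul hR hsq hx, ← mul_sum,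
    sum_sub_distrib, mul_sum_sum_piAntidiag_eq_zero hp hR hMR hι ht hx hsum, sum_const,
    nsmul_one, sub_zero, mul_comm]

lemma reciprocalSum_mul_eq_sum_antidiagonal [Nonempty ι] (hp : p.Prime) (hR : IsPLocal p R)
    (hM : p ∣ M) (hM0 : 0 < M) (hMR : p * (M : R) = 0) (hι : p = 3 ∨ ¬p ∣ Fintype.card ι) {d : ℕ}
    (hd : ∀ t, t < d → d < t + Fintype.card ι → p ∣ #(piAntidiag (univ : Finset ι) t)) :
    reciprocalSum R p ι (d * M) (d * M) =
      ∑ st ∈ antidiagonal d,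
        #(piAntidiag (univ : Finset ι) st.2) * reciprocalSum R p ι M (st.1 * M) := by
  rw [reciprocalSum, sum_coprimeTuples_mul hM hM0]
  refine sum_congr rfl fun st hst => ?_
  rw [HasAntidiagonal.mem_antidiagonal] at hst
  by_cases hs : st.1 = 0 ∨ Fintype.card ι ≤ st.1
  · simp [reciprocalSum, coprimeTuples_mul_eq_empty hs]
  rw [reciprocalSum, mul_sum]
  refine sum_congr rfl fun x hx => ?_
  obtain ⟨hsum, hx⟩ := mem_coprimeTuples.1 hx
  exact sum_prod_ringInverse_add_mul hp hR hM hMR hι (hd _ (by lia) (by lia))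
    (fun i => (hx i).2) (hsum ▸ hM.mul_left _)

lemma natCast_dvd_reciprocalSum_sub (hR : IsPLocal p R) (hM : p ∣ M) {N N' : ℕ}
    (hN : N + N' = Fintype.card ι * M) :
    (M : R) ∣ reciprocalSum R p ι M N' - (-1) ^ Fintype.card ι * reciprocalSum R p ι M N := by
  set π := Ideal.Quotient.mk (Ideal.span {(M : R)})
  have hM0 : (M : R ⧸ Ideal.span {(M : R)}) = 0 := by
    rw [← map_natCast π, Ideal.Quotient.eq_zero_iff_dvd]
  rw [← Ideal.Quotient.eq_zero_iff_dvd, map_sub, map_mul, map_pow, map_neg, map_one,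
    map_reciprocalSum hR, map_reciprocalSum hR, reciprocalSum_reflect (hR.map π) hM hM0 hN,
    sub_self]

lemma reciprocalSum_fin_three_mul (hp : p.Prime) (hR : IsPLocal p R) (hM : p ∣ M) (hM0 : 0 < M)
    (hMR : p * (M : R) = 0) {k : ℕ} (hk : p = 2 * k + 1) :
    reciprocalSum R p (Fin 3) (p * M) (p * M) =
      p * ((k + 1) * reciprocalSum R p (Fin 3) M M +
        k * reciprocalSum R p (Fin 3) M (2 * M)) := by
  have hp3 : 3 ≤ p := by have := hp.two_le; lia
  have hcard₁ : #(piAntidiag (univ : Finset (Fin 3)) (p - 1)) = p * (k + 1) := by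
    have := two_mul_choose_add_two (p - 1)
    rw [← card_piAntidiag_fin_three, show p - 1 + 1 = p by lia,
      show p - 1 + 2 = 2 * (k + 1) by lia] at this
    linarith
  have hcard₂ : #(piAntidiag (univ : Finset (Fin 3)) (p - 2)) = p * k := by
    have := two_mul_choose_add_two (p - 2)
    rw [← card_piAntidiag_fin_three, show p - 2 + 2 = p by lia,
      show p - 2 + 1 = 2 * k by lia] at this
    linarith
  have hd (t : ℕ) (ht : t < p) (ht' : p < t + Fintype.card (Fin 3)) :
      p ∣ #(piAntidiag (univ : Finset (Fin 3)) t) := by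
    rw [Fintype.card_fin] at ht'
    obtain rfl | rfl : t = p - 1 ∨ t = p - 2 := by lia
    exacts [⟨_, hcard₁⟩, ⟨_, hcard₂⟩]
  have hι : p = 3 ∨ ¬p ∣ Fintype.card (Fin 3) := by
    rw [Fintype.card_fin, or_iff_not_imp_right, not_not]
    exact fun h => (Nat.prime_dvd_prime_iff_eq hp Nat.prime_three).1 h
  rw [reciprocalSum_mul_eq_sum_antidiagonal hp hR hM hM0 hMR hι hd,
    ← sum_subset (s₁ := {(1, p - 1), (2, p - 2)}) (fun st => ?_) fun st hst hst' => ?_,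
    sum_pair (by simp), hcard₁, hcard₂, one_mul]
  · push_cast
    ring
  · simp only [mem_insert, mem_singleton, HasAntidiagonal.mem_antidiagonal]
    rintro (rfl | rfl) <;> lia
  · rw [reciprocalSum, coprimeTuples_mul_eq_empty, sum_empty, mul_zero]
    rw [Fintype.card_fin]
    simp only [mem_insert, mem_singleton, Prod.ext_iff,
      HasAntidiagonal.mem_antidiagonal] at hst hst'
    lia

lemma natCast_dvd_reciprocalSum_mul_sub (hp : p.Prime) (hp3 : 3 ≤ p) (hR : IsPLocal p R)
    (hM : p ∣ M) (hM0 : 0 < M) :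
    ((p * M : ℕ) : R) ∣
      reciprocalSum R p (Fin 3) (p * M) (p * M) - p * reciprocalSum R p (Fin 3) M M := by
  obtain ⟨k, hk⟩ : Odd p := hp.odd_of_ne_two (by lia)
  set π := Ideal.Quotient.mk (Ideal.span {((p * M : ℕ) : R)})
  have hzero : (p : R ⧸ Ideal.span {((p * M : ℕ) : R)}) * M = 0 := by
    rw [← Nat.cast_mul, ← map_natCast π, Ideal.Quotient.eq_zero_iff_dvd]
  have hreflect : π (p * (reciprocalSum R p (Fin 3) M M +
      reciprocalSum R p (Fin 3) M (2 * M))) = 0 := by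
    have hdvd := natCast_dvd_reciprocalSum_sub (N := M) (N' := 2 * M) (ι := Fin 3) hR hM
      (by rw [Fintype.card_fin]; ring)
    rw [Ideal.Quotient.eq_zero_iff_dvd, Nat.cast_mul]
    refine mul_dvd_mul_left _ ?_
    convert hdvd using 1
    rw [Fintype.card_fin]
    ring
  rw [← Ideal.Quotient.eq_zero_iff_dvd, map_sub, map_reciprocalSum hR,
    reciprocalSum_fin_three_mul hp (hR.map π) hM hM0 hzero hk]
  simp only [map_mul, map_add, map_natCast, map_reciprocalSum hR] at hreflect ⊢
  linear_combination k * hreflect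

lemma pow_dvd_reciprocalSum_sub (hp : p.Prime) (hp3 : 3 ≤ p) (hR : IsPLocal p R) (r : ℕ) :
    (p : R) ^ (r + 1) ∣ reciprocalSum R p (Fin 3) (p ^ (r + 1)) (p ^ (r + 1)) -
      p ^ r * reciprocalSum R p (Fin 3) p p := by
  induction r with
  | zero => simp
  | succ r ih =>
    have hstep := natCast_dvd_reciprocalSum_mul_sub (M := p ^ (r + 1)) hp hp3 hR
      (dvd_pow_self p r.succ_ne_zero) (pow_pos hp.pos _)
    rw [← pow_succ', Nat.cast_pow] at hstep
    have hmul := mul_dvd_mul_left (p : R) ih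
    rw [← pow_succ'] at hmul
    convert dvd_add hstep hmul using 1
    ring

end Lift

section PowerSums

lemma sum_pow_eq_ite {K : Type*} [Field K] [Fintype K] {m : ℕ} (hm : m ≠ 0) :
    ∑ x : K, x ^ m = if Fintype.card K - 1 ∣ m then -1 else 0 := by
  classical
  rw [← FiniteField.sum_pow_units, Fintype.sum_eq_add_sum_subtype_ne _ 0, zero_pow hm, zero_add]
  exact (Fintype.sum_equiv unitsEquivNeZero _ _ fun _ => rfl).symm

lemma sum_range_zmod {n : ℕ} [NeZero n] {A : Type*} [AddCommMonoid A] (f : ZMod n → A) :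
    ∑ m ∈ range n, f m = ∑ t, f t :=
  sum_nbij' (fun m => (m : ZMod n)) ZMod.val (fun _ _ => mem_univ _)
    (fun t _ => mem_range.2 t.val_lt) (fun _ hm => ZMod.val_cast_of_lt (mem_range.1 hm))
    (fun t _ => ZMod.natCast_zmod_val t) fun _ _ => rfl

variable {p : ℕ} [Fact p.Prime]

lemma zmod_inv_eq_pow (hp3 : 3 ≤ p) (t : ZMod p) : t⁻¹ = t ^ (p - 2) := by
  rcases eq_or_ne t 0 with rfl | ht
  · rw [inv_zero, zero_pow (by lia)]
  · refine inv_eq_of_mul_eq_one_right ?_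
    rw [← pow_succ', show p - 2 + 1 = p - 1 by lia, ZMod.pow_card_sub_one_eq_one ht]

lemma sum_inv_sq_mul_pow (hp3 : 3 ≤ p) {i : ℕ} (hi : i < p - 1) :
    ∑ t : ZMod p, t⁻¹ ^ 2 * t ^ (p - 1 - i) = if i = p - 3 then -1 else 0 := by
  have hdvd : p - 1 ∣ (p - 2) * 2 + (p - 1 - i) ↔ i = p - 3 := by
    refine ⟨?_, fun h => ⟨2, by lia⟩⟩
    rintro ⟨c, hc⟩
    have hc1 : 1 < c := by
      by_contra! h
      have := Nat.mul_le_mul_left (p - 1) h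
      lia
    have hc3 : c < 3 := by
      by_contra! h
      have := Nat.mul_le_mul_left (p - 1) h
      lia
    obtain rfl : c = 2 := by lia
    lia
  simp only [zmod_inv_eq_pow hp3, ← pow_mul, ← pow_add]
  rw [sum_pow_eq_ite (by lia), ZMod.card]
  simp only [hdvd]

lemma natCast_choose_sub_three (hp3 : 3 ≤ p) : ((p - 1).choose (p - 3) : ZMod p) = 1 := by
  obtain ⟨q, rfl⟩ : ∃ q, p = q + 3 := ⟨p - 3, by lia⟩
  have hp0 : (q : ZMod (q + 3)) + 3 = 0 := by exact_mod_cast ZMod.natCast_self (q + 3)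
  have h2 : (2 : ZMod (q + 3)) ≠ 0 := by
    exact_mod_cast (isPLocal_zmod 2 (Nat.not_dvd_of_pos_of_lt two_pos (by lia))).ne_zero
  have hchoose := congrArg (Nat.cast : ℕ → ZMod (q + 3)) (two_mul_choose_add_two q)
  push_cast at hchoose
  refine mul_left_cancel₀ h2 ?_
  rw [show q + 3 - 1 = q + 2 by lia, Nat.add_sub_cancel]
  linear_combination hchoose + q * hp0

end PowerSums

section Bernoulli

variable {p : ℕ} [Fact p.Prime]

lemma reciprocalSum_fin_three_zmod :
    reciprocalSum (ZMod p) p (Fin 3) p p =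
      -2 * ∑ n ∈ range p, ∑ x ∈ range n, (n : ZMod p)⁻¹ ^ 2 * (x : ZMod p)⁻¹ := by
  have hterm : ∀ l ∈ coprimeTuples p (Fin 3) p p, ∏ i, (l i : ZMod p)⁻¹ʳ =
      -((l 2 : ZMod p)⁻¹ ^ 2 * (l 0 : ZMod p)⁻¹) - (l 2 : ZMod p)⁻¹ ^ 2 * (l 1 : ZMod p)⁻¹ := by
    intro l hl
    obtain ⟨hsum, hl⟩ := mem_coprimeTuples.1 hl
    have hne i : (l i : ZMod p) ≠ 0 := (isPLocal_zmod _ (hl i).2).ne_zero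
    have hsum : (l 0 + l 1 + l 2 : ZMod p) = 0 := by
      rw [Fin.sum_univ_three] at hsum
      exact_mod_cast (congrArg Nat.cast hsum).trans (ZMod.natCast_self p)
    have := hne 0
    have := hne 1
    have := hne 2
    simp only [Fin.prod_univ_three, Ring.inverse_eq_inv]
    field_simp
    linear_combination hsum
  have hswap : ∑ l ∈ coprimeTuples p (Fin 3) p p, (l 2 : ZMod p)⁻¹ ^ 2 * (l 1 : ZMod p)⁻¹ =
      ∑ l ∈ coprimeTuples p (Fin 3) p p, (l 2 : ZMod p)⁻¹ ^ 2 * (l 0 : ZMod p)⁻¹ :=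
    sum_coprimeTuples_comp (Equiv.swap 0 1)
      fun l : Fin 3 → ℕ => (l 2 : ZMod p)⁻¹ ^ 2 * (l 0 : ZMod p)⁻¹
  rw [reciprocalSum, sum_congr rfl hterm, sum_sub_distrib, sum_neg_distrib, hswap,
    ← sum_coprimeTuples_fin_three_eq_sum_range
      (fun n x => (n : ZMod p)⁻¹ ^ 2 * (x : ZMod p)⁻¹) (by simp)]
  have hneg : ∀ l ∈ coprimeTuples p (Fin 3) p p,
      ((p - l 2 : ℕ) : ZMod p)⁻¹ ^ 2 * (l 0 : ZMod p)⁻¹ =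
        (l 2 : ZMod p)⁻¹ ^ 2 * (l 0 : ZMod p)⁻¹ := fun l hl => by
    rw [Nat.cast_sub ((mem_coprimeTuples.1 hl).2 2).1.le, ZMod.natCast_self, zero_sub, inv_neg,
      neg_sq]
  rw [sum_congr rfl hneg]
  ring

/-- The Bernoulli number `bernoulli n` as a `p`-adic integer, or `0` if it is not `p`-integral. -/
noncomputable def padicBernoulli (p n : ℕ) [Fact p.Prime] : ℤ_[p] :=
  if h : ‖((bernoulli n : ℚ) : ℚ_[p])‖ ≤ 1 then ⟨bernoulli n, h⟩ else 0

lemma norm_natCast_inv_eq_one {n : ℕ} (hn : ¬p ∣ n) : ‖(n : ℚ_[p])⁻¹‖ = 1 := by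
  rw [norm_inv, ← PadicInt.coe_natCast, PadicInt.padic_norm_e_of_padicInt,
    PadicInt.norm_natCast_eq_one_iff.2 ((Fact.out : p.Prime).coprime_iff_not_dvd.2 hn), inv_one]

lemma norm_bernoulli_le_one {n : ℕ} (hn : n + 1 < p) : ‖((bernoulli n : ℚ) : ℚ_[p])‖ ≤ 1 := by
  change _ ∈ PadicInt.subring p
  induction n using Nat.strong_induction_on with
  | _ n ih =>
    have hrec : ((bernoulli n : ℚ) : ℚ_[p]) =
        ((n + 1 : ℕ) : ℚ_[p])⁻¹ * ((if n = 0 then 1 else 0 : ℚ) -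
          ∑ k ∈ range n, ((n + 1).choose k : ℚ_[p]) * (bernoulli k : ℚ)) := by
      have hspec := congrArg (Rat.cast : ℚ → ℚ_[p]) (sum_bernoulli (n + 1))
      rw [sum_range_succ, Nat.choose_succ_self_right] at hspec
      simp only [Nat.add_eq_right] at hspec
      push_cast at hspec ⊢
      rw [← hspec, add_sub_cancel_left, inv_mul_cancel_left₀ (by exact_mod_cast n.succ_ne_zero)]
    rw [hrec]
    refine mul_mem ?_ (sub_mem ?_ (sum_mem fun k hk => ?_))
    · change ‖_‖ ≤ 1
      exact (norm_natCast_inv_eq_one (Nat.not_dvd_of_pos_of_lt n.succ_pos hn)).le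
    · split_ifs <;> simp
    · rw [mem_range] at hk
      exact mul_mem (natCast_mem _ _) (ih k hk (by lia))

lemma coe_padicBernoulli {n : ℕ} (hn : n + 1 < p) :
    (padicBernoulli p n : ℚ_[p]) = (bernoulli n : ℚ) := by
  exact congrArg Subtype.val (dif_pos (norm_bernoulli_le_one hn))

lemma padicInt_sum_range_pow {n : ℕ} (hn : n + 1 < p) (l : ℕ) :
    (n + 1) * ∑ x ∈ range l, (x : ℤ_[p]) ^ n =
      ∑ i ∈ range (n + 1), padicBernoulli p i * (n + 1).choose i * (l : ℤ_[p]) ^ (n + 1 - i) := by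
  have hn0 : (n : ℚ_[p]) + 1 ≠ 0 := by exact_mod_cast n.succ_ne_zero
  refine PadicInt.ext ?_
  have hsum := congrArg (Rat.cast : ℚ → ℚ_[p]) (sum_range_pow l n)
  rw [← sum_div] at hsum
  push_cast [PadicInt.coe_sum] at hsum ⊢
  rw [hsum, mul_div_cancel₀ _ hn0]
  refine sum_congr rfl fun i hi => ?_
  rw [coe_padicBernoulli (by rw [mem_range] at hi; lia)]

lemma sum_inv_sq_mul_sum_inv (hp3 : 3 ≤ p) :
    ∑ n ∈ range p, ∑ x ∈ range n, (n : ZMod p)⁻¹ ^ 2 * (x : ZMod p)⁻¹ =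
      PadicInt.toZMod (padicBernoulli p (p - 3)) := by
  set β := fun i => PadicInt.toZMod (padicBernoulli p i)
  have faulhaber (n : ℕ) : ∑ x ∈ range n, (x : ZMod p)⁻¹ =
      -∑ i ∈ range (p - 1), β i * (p - 1).choose i * (n : ZMod p) ^ (p - 1 - i) := by
    have h := congrArg PadicInt.toZMod (padicInt_sum_range_pow (p := p) (n := p - 2) (by lia) n)
    rw [show p - 2 + 1 = p - 1 by lia] at h
    have hp0 : ((p - 2 : ℕ) : ZMod p) = -2 := by
      rw [Nat.cast_sub (by lia), ZMod.natCast_self, zero_sub, Nat.cast_two]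
    simp only [map_mul, map_add, map_one, map_sum, map_pow, map_natCast, hp0] at h
    simp only [zmod_inv_eq_pow hp3]
    linear_combination -h
  calc ∑ n ∈ range p, ∑ x ∈ range n, (n : ZMod p)⁻¹ ^ 2 * (x : ZMod p)⁻¹
      = ∑ n ∈ range p, -∑ i ∈ range (p - 1), β i * (p - 1).choose i *
          ((n : ZMod p)⁻¹ ^ 2 * (n : ZMod p) ^ (p - 1 - i)) := by
        refine sum_congr rfl fun n _ => ?_
        rw [← mul_sum, faulhaber, mul_neg, mul_sum]
        exact congrArg _ (sum_congr rfl fun i _ => by ring)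
    _ = -∑ i ∈ range (p - 1), β i * (p - 1).choose i *
          ∑ t : ZMod p, t⁻¹ ^ 2 * t ^ (p - 1 - i) := by
        rw [sum_neg_distrib, sum_comm]
        refine congrArg _ (sum_congr rfl fun i _ => ?_)
        rw [← mul_sum, sum_range_zmod fun t => t⁻¹ ^ 2 * t ^ (p - 1 - i)]
    _ = β (p - 3) := by
        rw [sum_eq_single_of_mem (p - 3) (by rw [mem_range]; lia) fun i hi hne => by
          rw [sum_inv_sq_mul_pow hp3 (mem_range.1 hi), if_neg hne, mul_zero]]
        rw [sum_inv_sq_mul_pow hp3 (by lia), if_pos rfl, natCast_choose_sub_three hp3]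
        ring

lemma natCast_dvd_reciprocalSum_add_padicBernoulli (hp3 : 3 ≤ p) :
    (p : ℤ_[p]) ∣ reciprocalSum ℤ_[p] p (Fin 3) p p + 2 * padicBernoulli p (p - 3) := by
  rw [← Ideal.mem_span_singleton, ← PadicInt.maximalIdeal_eq_span_p, ← PadicInt.ker_toZMod,
    RingHom.mem_ker, map_add, map_mul, map_reciprocalSum isPLocal_padicInt,
    reciprocalSum_fin_three_zmod, sum_inv_sq_mul_sum_inv hp3, map_ofNat]
  ring

lemma pow_dvd_reciprocalSum_add_padicBernoulli (hp3 : 3 ≤ p) (r : ℕ) :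
    (p : ℤ_[p]) ^ (r + 1) ∣ reciprocalSum ℤ_[p] p (Fin 3) (p ^ (r + 1)) (p ^ (r + 1)) -
      -2 * p ^ r * padicBernoulli p (p - 3) := by
  have hbase := mul_dvd_mul_left ((p : ℤ_[p]) ^ r)
    (natCast_dvd_reciprocalSum_add_padicBernoulli hp3)
  rw [← pow_succ] at hbase
  convert dvd_add (pow_dvd_reciprocalSum_sub Fact.out hp3 isPLocal_padicInt r) hbase using 1
  ring

lemma coe_reciprocalSum (M N : ℕ) (ι : Type*) [Fintype ι] [DecidableEq ι] :
    (reciprocalSum ℤ_[p] p ι M N : ℚ_[p]) = (reciprocalSum ℚ p ι M N : ℚ) :=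
  (map_reciprocalSum isPLocal_padicInt (PadicInt.Coe.ringHom (p := p))).trans
    (map_reciprocalSum isPLocal_of_charZero (Rat.castHom ℚ_[p])).symm

lemma ratCong_of_dvd {r : ℕ} {x y : ℚ} {a b : ℤ_[p]} (ha : (a : ℚ_[p]) = x)
    (hb : (b : ℚ_[p]) = y) (hab : (p : ℤ_[p]) ^ r ∣ a - b) : ratCong p r x y := by
  have hp : p.Prime := Fact.out
  have hp0 : (p : ℚ_[p]) ≠ 0 := Nat.cast_ne_zero.2 hp.ne_zero
  obtain ⟨c, hc⟩ := hab
  have hcoe : (((x - y) / p ^ r : ℚ) : ℚ_[p]) = c := by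
    have := congrArg ((↑) : ℤ_[p] → ℚ_[p]) hc
    push_cast at this ⊢
    rw [← ha, ← hb, this, mul_div_cancel_left₀ _ (pow_ne_zero r hp0)]
  have hpow : (p : ℚ) ^ r ≠ 0 := pow_ne_zero r (Nat.cast_ne_zero.2 hp.ne_zero)
  refine ⟨(x - y) / p ^ r, (mul_div_cancel₀ _ hpow).symm, fun hdvd => ?_⟩
  have hunit := PadicInt.isUnit_den ((x - y) / p ^ r) (by rw [hcoe]; exact c.norm_le_one)
  rw [PadicInt.isUnit_iff, PadicInt.norm_natCast_eq_one_iff, hp.coprime_iff_not_dvd] at hunit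
  exact hunit hdvd

end Bernoulli

theorem stmt_0 (p r : ℕ) (hp : p.Prime) (hp3 : 3 ≤ p) (hr : 1 ≤ r) :
    ratCong p r (hsum p 3 (p ^ r))
      (-2 * (p : ℚ) ^ (r - 1) * bernoulli (p - 3)) := by
  have := Fact.mk hp
  obtain ⟨r, rfl⟩ : ∃ s, r = s + 1 := ⟨r - 1, by lia⟩
  rw [hsum_eq_reciprocalSum 3 (dvd_pow_self p r.succ_ne_zero), Nat.add_sub_cancel]
  refine ratCong_of_dvd (coe_reciprocalSum _ _ _) ?_
    (pow_dvd_reciprocalSum_add_padicBernoulli hp3 r)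
  push_cast
  rw [coe_padicBernoulli (by lia), show ((2 : ℤ_[p]) : ℚ_[p]) = 2 from PadicInt.coe_natCast 2]
end

section
/- Let p be a prime, α a positive integer with α ≤ p-3, and b a positive integer. Then Σ_{1 ≤ l < bp, p∤l} 1/l^α ≡ -(b²α(α+1)/(2(α+2)))·B_{p-α-2}·p² (mod p³) if α is odd, and ≡ (bα/(α+1))·B_{p-α-1}·p (mod p²) if α is even. -/
/-!
Let `p ∣ N` and write `S n` for the sum of `1 / l ^ n` over the `l < N` coprime to `p`.

Let `n + (k + 1) = p` and put `t = l ^ (p - 1)`. Expanding `t ^ (k + 1)` to first order at `t = 1`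
gives `n * t + t ^ (k + 1) ≡ n + 1` modulo `p ^ 2`, and dividing by `l ^ n` yields
`(n + 1) / l ^ n ≡ n * l ^ k + l ^ (p * k)`. When `k ≥ 2` the right-hand side vanishes modulo
`p ^ 2` at multiples of `p`, so one may sum it over all `l < N`. The sum of the `l ^ (p * k)`
vanishes because `l ^ p` modulo `p ^ 2` depends only on `l` modulo `p`, and the sum of the `l ^ k`
is `N * B_k` modulo `p ^ 2` by Faulhaber's formula. Hence `(n + 1) * S n ≡ n * N * B_k`.

For odd `n`, pair `l` with `N - l`. The trapezoid rule for `s ↦ s ^ (-n - 1)` between `l - N` and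
`l`, read as a formal identity with an error divisible by `N ^ 3`, gives
`2 * S n ≡ -n * N * S (n + 1)` modulo `p ^ 3`, where `S (n + 1)` is needed only modulo `p ^ 2`.
-/

open Finset

theorem sum_range_mul_of_periodic {M : Type*} [AddCommMonoid M] {p : ℕ} [NeZero p] {f : ℕ → M}
    (hf : Function.Periodic f p) (b : ℕ) :
    ∑ l ∈ range (b * p), f l = b • ∑ x : ZMod p, f x.val := by
  have sum_zmod : ∑ x : ZMod p, f x.val = ∑ i ∈ range p, f i := by
    obtain ⟨n, rfl⟩ := Nat.exists_eq_succ_of_ne_zero (NeZero.ne p)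
    exact Fin.sum_univ_eq_sum_range f (n + 1)
  induction b with
  | zero => simp
  | succ b ih =>
    have shift (i : ℕ) : f (b * p + i) = f i := by rw [add_comm]; exact hf.nat_mul b i
    simp only [add_mul, one_mul, sum_range_add, ih, succ_nsmul, shift, sum_zmod]

section PowerSums

variable {p : ℕ} [Fact p.Prime]

theorem natCast_pow_prime_pow_congr {x y : ℕ} (h : (x : ZMod p) = y) (r : ℕ) :
    (x : ZMod (p ^ (r + 1))) ^ p ^ r = (y : ZMod (p ^ (r + 1))) ^ p ^ r := by
  have hdvd : (p : ℤ) ∣ x - y := by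
    rw [← ZMod.intCast_zmod_eq_zero_iff_dvd]
    simp [h]
  have hdvd_pow : ((p ^ (r + 1) : ℕ) : ℤ) ∣ (x : ℤ) ^ p ^ r - (y : ℤ) ^ p ^ r := by
    exact_mod_cast dvd_sub_pow_of_dvd_sub hdvd r
  rw [← ZMod.intCast_zmod_eq_zero_iff_dvd] at hdvd_pow
  push_cast at hdvd_pow
  exact sub_eq_zero.1 hdvd_pow

theorem isUnit_pow_prime_pow_mul_sub_one {a m : ℕ} (ha : (a : ZMod p) ^ m ≠ 1) (r : ℕ) :
    IsUnit ((a : ZMod (p ^ (r + 1))) ^ (p ^ r * m) - 1) := by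
  have hndvd : ¬ (p : ℤ) ∣ (a : ℤ) ^ (p ^ r * m) - 1 := by
    rw [← ZMod.intCast_zmod_eq_zero_iff_dvd]
    simpa [pow_mul, ZMod.pow_card_pow, sub_eq_zero] using ha
  have hcop : IsCoprime ((p ^ (r + 1) : ℕ) : ℤ) ((a : ℤ) ^ (p ^ r * m) - 1) := by
    push_cast
    exact ((Nat.prime_iff_prime_int.1 Fact.out).coprime_iff_not_dvd.2 hndvd).pow_left
  exact mod_cast (ZMod.coe_int_isUnit_iff_isCoprime _ _).2 hcop

/- As `x ↦ x ^ p ^ r` modulo `p ^ (r + 1)` factors through a multiplicative map on `ZMod p`,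
replacing `x` by `a * x` multiplies the sum by `a ^ (p ^ r * m)`, which is not `1` modulo `p`. -/
theorem sum_range_pow_prime_pow_mul_eq_zero {m N : ℕ} (hm : ¬ p - 1 ∣ m) (hN : p ∣ N) (r : ℕ) :
    ∑ l ∈ range N, (l : ZMod (p ^ (r + 1))) ^ (p ^ r * m) = 0 := by
  obtain ⟨b, rfl⟩ := hN
  set f : ℕ → ZMod (p ^ (r + 1)) := fun l ↦ (l : ZMod (p ^ (r + 1))) ^ (p ^ r * m)
  have f_congr {x y : ℕ} (h : (x : ZMod p) = y) : f x = f y := by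
    simp only [f, pow_mul, natCast_pow_prime_pow_congr h r]
  obtain ⟨a, ha⟩ : ∃ a : (ZMod p)ˣ, a ^ m ≠ 1 := by
    rw [← ZMod.card p, ← FiniteField.forall_pow_eq_one_iff] at hm
    exact not_forall.1 hm
  have f_mul (x : ZMod p) : f (a * x : ZMod p).val = f (a : ZMod p).val * f x.val := by
    rw [f_congr (y := (a : ZMod p).val * x.val) (by simp)]
    simp only [f, Nat.cast_mul, mul_pow]
  have f_unit : IsUnit (f (a : ZMod p).val - 1) :=
    isUnit_pow_prime_pow_mul_sub_one (by simpa [Units.ext_iff] using ha) r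
  have sum_invariant : f (a : ZMod p).val * ∑ x : ZMod p, f x.val = ∑ x : ZMod p, f x.val := by
    simp only [mul_sum, ← f_mul]
    exact Equiv.sum_comp a.mulLeft fun x : ZMod p ↦ f x.val
  have sum_eq_zero : ∑ x : ZMod p, f x.val = 0 := by
    rw [← f_unit.mul_right_eq_zero, sub_mul, one_mul, sum_invariant, sub_self]
  rw [mul_comm, sum_range_mul_of_periodic (fun l ↦ f_congr (by simp)), sum_eq_zero, smul_zero]

end PowerSums

theorem sq_dvd_mul_add_pow_sub {R : Type*} [CommRing R] {a t : R} {n m : ℕ} (ht : a ∣ t - 1)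
    (ha : (n + m : R) = a) : a ^ 2 ∣ n * t + t ^ m - (n + 1) := by
  obtain ⟨q, hq⟩ := ht
  obtain ⟨k, hk⟩ := Polynomial.powAddExpansion 1 (t - 1) m
  rw [add_sub_cancel, one_pow, one_pow, hq] at hk
  exact ⟨q + k * q ^ 2, by linear_combination (n : R) * hq + hk + a * q * ha⟩

theorem pow_three_dvd_trapezoid {R : Type*} [CommRing R] {a x z : R} (h : z - x = a * (x * z))
    (n : ℕ) : a ^ 3 ∣ n * a * (x ^ (n + 1) + z ^ (n + 1)) - 2 * (z ^ n - x ^ n) := by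
  have diff_pow : z ^ n - x ^ n = a * ∑ i ∈ range n, z ^ (i + 1) * x ^ (n - i) := by
    rw [← geom_sum₂_mul, h, mul_sum, sum_mul]
    refine sum_congr rfl fun i hi ↦ ?_
    rw [show n - i = n - 1 - i + 1 by grind]
    ring
  have diff_pow_reflected : z ^ n - x ^ n = a * ∑ i ∈ range n, z ^ (n - i) * x ^ (i + 1) := by
    rw [diff_pow, ← sum_range_reflect]
    congr 1
    refine sum_congr rfl fun i hi ↦ ?_
    rw [show n - 1 - i + 1 = n - i by grind, show n - (n - 1 - i) = i + 1 by grind]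
  have factored : n * a * (x ^ (n + 1) + z ^ (n + 1)) - 2 * (z ^ n - x ^ n) =
      a * ∑ i ∈ range n, (z ^ (i + 1) - x ^ (i + 1)) * (z ^ (n - i) - x ^ (n - i)) := by
    have expand : ∑ i ∈ range n, (z ^ (i + 1) - x ^ (i + 1)) * (z ^ (n - i) - x ^ (n - i)) =
        ∑ i ∈ range n, ((x ^ (n + 1) + z ^ (n + 1)) - z ^ (i + 1) * x ^ (n - i) -
          z ^ (n - i) * x ^ (i + 1)) := by
      refine sum_congr rfl fun i hi ↦ ?_
      rw [show n + 1 = i + 1 + (n - i) by grind]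
      ring
    rw [expand, sum_sub_distrib, sum_sub_distrib, sum_const, card_range, nsmul_eq_mul]
    linear_combination -diff_pow - diff_pow_reflected
  have a_dvd (k : ℕ) : a ∣ z ^ k - x ^ k :=
    (Dvd.intro _ h.symm).trans (sub_dvd_pow_sub_pow z x k)
  rw [factored, pow_succ', sq]
  exact mul_dvd_mul_left a (dvd_sum fun i _ ↦ mul_dvd_mul (a_dvd _) (a_dvd _))

section PIntegers

variable {p : ℕ} [Fact p.Prime]

/-- The ring of `p`-integral rational numbers, as a subring of `ℚ`. -/
abbrev pIntegers (p : ℕ) [Fact p.Prime] : Subring ℚ := (Rat.padicValuation p).integer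

theorem mem_pIntegers_iff {x : ℚ} : x ∈ pIntegers p ↔ ¬ p ∣ x.den :=
  Rat.padicValuation_le_one_iff

theorem natCast_inv_mem_pIntegers {n : ℕ} (hn : ¬ p ∣ n) : (n : ℚ)⁻¹ ∈ pIntegers p := by
  have : Rat.padicValuation p n = 1 := by
    rw [← Int.cast_natCast, Rat.padicValuation_cast]
    exact Int.padicValuation_eq_one_iff.2 (mod_cast hn)
  rw [Valuation.mem_integer_iff, map_inv₀, this, inv_one]

/-- The `pIntegers p`-submodule `p ^ r * pIntegers p` of `ℚ`, whose relation
`x ≡ y [SMOD pPowMultiples p r]` is the congruence modulo `p ^ r` of `p`-integral numbers. -/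
def pPowMultiples (p : ℕ) [Fact p.Prime] (r : ℕ) : Submodule (pIntegers p) ℚ :=
  Submodule.span (pIntegers p) {(p : ℚ) ^ r}

theorem mem_pPowMultiples_iff {r : ℕ} {x : ℚ} :
    x ∈ pPowMultiples p r ↔ ∃ c ∈ pIntegers p, x = p ^ r * c := by
  simp only [pPowMultiples, Submodule.mem_span_singleton, Subtype.exists, Subring.smul_def,
    smul_eq_mul, exists_prop, eq_comm (a := x), mul_comm]

theorem ratCong_iff_sModEq {r : ℕ} {x y : ℚ} :
    ratCong p r x y ↔ x ≡ y [SMOD pPowMultiples p r] := by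
  simp only [ratCong, SModEq.sub_mem, mem_pPowMultiples_iff, mem_pIntegers_iff, and_comm]

theorem sModEq_of_pow_dvd {r : ℕ} {x y : pIntegers p} (h : (p : pIntegers p) ^ r ∣ x - y) :
    (x : ℚ) ≡ y [SMOD pPowMultiples p r] := by
  obtain ⟨c, hc⟩ := h
  exact SModEq.sub_mem.2 (mem_pPowMultiples_iff.2 ⟨c, c.2, mod_cast congrArg Subtype.val hc⟩)

theorem natCast_sModEq_zero {r a : ℕ} (h : p ^ r ∣ a) : (a : ℚ) ≡ 0 [SMOD pPowMultiples p r] := by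
  obtain ⟨c, rfl⟩ := h
  exact SModEq.zero.2 (mem_pPowMultiples_iff.2 ⟨c, natCast_mem _ c, by push_cast; rfl⟩)

theorem sModEq_mul_left {r : ℕ} {c x y : ℚ} (hc : c ∈ pIntegers p)
    (h : x ≡ y [SMOD pPowMultiples p r]) : c * x ≡ c * y [SMOD pPowMultiples p r] :=
  h.smul (⟨c, hc⟩ : pIntegers p)

theorem sModEq_natCast_mul_left {r N : ℕ} {x y : ℚ} (hN : p ∣ N)
    (h : x ≡ y [SMOD pPowMultiples p r]) : N * x ≡ N * y [SMOD pPowMultiples p (r + 1)] := by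
  obtain ⟨b, rfl⟩ := hN
  obtain ⟨c, hc, hxy⟩ := mem_pPowMultiples_iff.1 (SModEq.sub_mem.1 h)
  refine SModEq.sub_mem.2 (mem_pPowMultiples_iff.2 ⟨b * c, mul_mem (natCast_mem _ b) hc, ?_⟩)
  push_cast
  linear_combination p * b * hxy

theorem natCast_inv_mem_pIntegers_of_lt {n : ℕ} (hn : 0 < n) (hnp : n < p) :
    (n : ℚ)⁻¹ ∈ pIntegers p :=
  natCast_inv_mem_pIntegers (Nat.not_dvd_of_pos_of_lt hn hnp)

theorem bernoulli_mem_pIntegers {n : ℕ} (hn : n + 2 ≤ p) : bernoulli n ∈ pIntegers p := by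
  have bernoulli'_mem : bernoulli' n ∈ pIntegers p := by
    induction n using Nat.strong_induction_on with
    | _ n ih =>
      rw [bernoulli'_def]
      refine sub_mem (one_mem _) (sum_mem fun k hk ↦ mul_mem ?_ (ih k (mem_range.1 hk) (by grind)))
      have hinv := natCast_inv_mem_pIntegers_of_lt (p := p) (n := n - k + 1) (by lia) (by lia)
      rw [Nat.cast_add_one, Nat.cast_sub (mem_range.1 hk).le] at hinv
      exact mul_mem (natCast_mem _ _) hinv
  exact mul_mem (pow_mem (neg_mem (one_mem _)) _) bernoulli'_mem

theorem sum_range_pow_sModEq_bernoulli {k N : ℕ} (hk : k + 2 ≤ p) (hN : p ∣ N) :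
    ∑ l ∈ range N, (l : ℚ) ^ k ≡ N * bernoulli k [SMOD pPowMultiples p 2] := by
  have hinv : ((k + 1 : ℕ) : ℚ)⁻¹ ∈ pIntegers p :=
    natCast_inv_mem_pIntegers_of_lt (by lia) (by lia)
  obtain ⟨b, rfl⟩ := hN
  set N := p * b
  have last : bernoulli k * (k + 1).choose k * N ^ (k + 1 - k) / (k + 1) = N * bernoulli k := by
    rw [Nat.choose_succ_self_right, Nat.add_sub_cancel_left, pow_one]
    push_cast
    field_simp
  rw [sum_range_pow, sum_range_succ, last, SModEq.sub_mem, add_sub_cancel_right]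
  refine sum_mem fun i hi ↦ mem_pPowMultiples_iff.2
    ⟨bernoulli i * (k + 1).choose i * b ^ 2 * N ^ (k - 1 - i) * ((k + 1 : ℕ) : ℚ)⁻¹, ?_, ?_⟩
  · have := bernoulli_mem_pIntegers (p := p) (n := i) (by grind)
    exact mul_mem (mul_mem (mul_mem (mul_mem this (natCast_mem _ _))
      (pow_mem (natCast_mem _ _) _)) (pow_mem (natCast_mem _ _) _)) hinv
  · rw [show k + 1 - i = 2 + (k - 1 - i) by grind, pow_add]
    simp only [N]
    push_cast
    ring

theorem sum_range_pow_prime_mul_sModEq_zero {m N : ℕ} (hm : ¬ p - 1 ∣ m) (hN : p ∣ N) :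
    ∑ l ∈ range N, (l : ℚ) ^ (p * m) ≡ 0 [SMOD pPowMultiples p 2] := by
  have sum_zmod := sum_range_pow_prime_pow_mul_eq_zero hm hN 1
  rw [pow_one] at sum_zmod
  have hdvd : p ^ 2 ∣ ∑ l ∈ range N, l ^ (p * m) :=
    (ZMod.natCast_eq_zero_iff _ _).1 (mod_cast sum_zmod)
  exact_mod_cast natCast_sModEq_zero hdvd

theorem natCast_dvd_pow_sub_one {l : ℕ} (hl : ¬ p ∣ l) :
    (p : pIntegers p) ∣ (l : pIntegers p) ^ (p - 1) - 1 := by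
  have hp : p.Prime := Fact.out
  have hcop : IsCoprime (l : ℤ) p :=
    Nat.isCoprime_iff_coprime.2 (hp.coprime_iff_not_dvd.2 hl).symm
  have hdvd : (p : ℤ) ∣ l ^ (p - 1) - 1 :=
    (Int.ModEq.pow_card_sub_one_eq_one hp hcop).symm.dvd
  exact_mod_cast map_dvd (Int.castRingHom (pIntegers p)) hdvd

end PIntegers

section CoprimeHarmonicSum

variable {p : ℕ}

/-- The sum of `1 / l ^ n` over the positive integers `l < N` that are not divisible by `p`. -/
def coprimeHarmonicSum (p N n : ℕ) : ℚ :=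
  ∑ l ∈ (Ico 1 N).filter (fun l ↦ ¬ p ∣ l), (1 : ℚ) / l ^ n

theorem coprimeHarmonicSum_reflect {n N : ℕ} (hN : p ∣ N) :
    ∑ l ∈ (Ico 1 N).filter (fun l ↦ ¬ p ∣ l), (1 : ℚ) / (N - l : ℕ) ^ n =
      coprimeHarmonicSum p N n := by
  have reflect := sum_Ico_reflect (fun l ↦ if ¬ p ∣ l then (1 : ℚ) / l ^ n else 0) 1 N.le_succ
  rw [Nat.add_sub_cancel_left, Nat.add_sub_cancel] at reflect
  rw [coprimeHarmonicSum, sum_filter, sum_filter, ← reflect]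
  refine sum_congr rfl fun l hl ↦ ?_
  simp only [Nat.dvd_sub_iff_right (mem_Ico.1 hl).2.le hN]

variable [Fact p.Prime]

theorem add_one_mul_inv_pow_sModEq {n k l : ℕ} (hnk : n + k + 1 = p) (hl : ¬ p ∣ l) :
    (n + 1) * (1 / (l : ℚ) ^ n) ≡ n * l ^ k + l ^ (p * k) [SMOD pPowMultiples p 2] := by
  have l_ne_zero : (l : ℚ) ≠ 0 := Nat.cast_ne_zero.2 fun h ↦ hl (h ▸ dvd_zero p)
  have hnk_cast : (n + (k + 1 : ℕ) : pIntegers p) = p := by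
    rw [add_assoc] at hnk
    exact_mod_cast congrArg (Nat.cast : ℕ → pIntegers p) hnk
  have tangent : (p : pIntegers p) ^ 2 ∣
      n * (l : pIntegers p) ^ (p - 1) + ((l : pIntegers p) ^ (p - 1)) ^ (k + 1) - (n + 1) :=
    sq_dvd_mul_add_pow_sub (natCast_dvd_pow_sub_one hl) hnk_cast
  have hmul := sModEq_mul_left (pow_mem (natCast_inv_mem_pIntegers hl) n)
    (sModEq_of_pow_dvd tangent)
  push_cast [inv_pow] at hmul
  have pow_fermat : (l : ℚ) ^ (p - 1) = l ^ n * l ^ k := by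
    rw [← hnk, Nat.add_sub_cancel, pow_add]
  have pow_fermat_pow : ((l : ℚ) ^ (p - 1)) ^ (k + 1) = l ^ n * l ^ (p * k) := by
    rw [pow_fermat, ← hnk]
    ring
  rw [pow_fermat_pow, pow_fermat] at hmul
  convert hmul.symm using 1 <;> field_simp

theorem add_one_mul_coprimeHarmonicSum_sModEq {n k N : ℕ} (hnk : n + k + 1 = p) (hk : 2 ≤ k) :
    (n + 1) * coprimeHarmonicSum p N n ≡
      n * ∑ l ∈ range N, (l : ℚ) ^ k + ∑ l ∈ range N, (l : ℚ) ^ (p * k)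
      [SMOD pPowMultiples p 2] := by
  have filter_eq : (Ico 1 N).filter (fun l ↦ ¬ p ∣ l) = (range N).filter (fun l ↦ ¬ p ∣ l) := by
    ext l
    simp only [mem_filter, mem_Ico, mem_range]
    rcases l.eq_zero_or_pos with rfl | hl
    · simp
    · grind
  rw [coprimeHarmonicSum, filter_eq, mul_sum, sum_filter, mul_sum, ← sum_add_distrib]
  refine SModEq.sum fun l _ ↦ ?_
  by_cases hl : p ∣ l
  · have pow_congr_zero {m : ℕ} (hm : 2 ≤ m) : (l : ℚ) ^ m ≡ 0 [SMOD pPowMultiples p 2] :=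
      mod_cast natCast_sModEq_zero ((pow_dvd_pow_of_dvd hl 2).trans (pow_dvd_pow l hm))
    have two_le : 2 ≤ p * k := hk.trans (Nat.le_mul_of_pos_left k (by lia))
    rw [if_neg (not_not.2 hl)]
    simpa using ((sModEq_mul_left (natCast_mem _ n) (pow_congr_zero hk)).add
      (pow_congr_zero two_le)).symm
  · rw [if_pos hl]
    exact add_one_mul_inv_pow_sModEq hnk hl

theorem coprimeHarmonicSum_sModEq_bernoulli {n N : ℕ} (hn : 1 ≤ n) (hnp : n + 3 ≤ p)
    (hN : p ∣ N) :
    coprimeHarmonicSum p N n ≡ n / (n + 1) * bernoulli (p - n - 1) * N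
      [SMOD pPowMultiples p 2] := by
  set k := p - n - 1
  have hinv : ((n + 1 : ℕ) : ℚ)⁻¹ ∈ pIntegers p :=
    natCast_inv_mem_pIntegers_of_lt (by lia) (by lia)
  have hk : ¬ p - 1 ∣ k := Nat.not_dvd_of_pos_of_lt (by lia) (by lia)
  have add_one_mul_congr := calc (n + 1) * coprimeHarmonicSum p N n
    _ ≡ n * ∑ l ∈ range N, (l : ℚ) ^ k + ∑ l ∈ range N, (l : ℚ) ^ (p * k)
        [SMOD pPowMultiples p 2] := add_one_mul_coprimeHarmonicSum_sModEq (by lia) (by lia)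
    _ ≡ n * (N * bernoulli k) + 0 [SMOD pPowMultiples p 2] :=
        (sModEq_mul_left (natCast_mem _ n) (sum_range_pow_sModEq_bernoulli (by lia) hN)).add
          (sum_range_pow_prime_mul_sModEq_zero hk hN)
  rw [add_zero] at add_one_mul_congr
  convert sModEq_mul_left hinv add_one_mul_congr using 1 <;> (push_cast; field_simp)

theorem two_mul_inv_pow_add_sModEq {n l N : ℕ} (hn : Odd n) (hN : p ∣ N) (hl : ¬ p ∣ l)
    (hlN : l ≤ N) :
    2 * (1 / (l : ℚ) ^ n + 1 / (N - l : ℕ) ^ n) ≡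
      -(n * N * (1 / (l : ℚ) ^ (n + 1) + 1 / (N - l : ℕ) ^ (n + 1))) [SMOD pPowMultiples p 3] := by
  have hl' : ¬ p ∣ N - l := by rwa [Nat.dvd_sub_iff_right hlN hN]
  set x : pIntegers p := ⟨_, natCast_inv_mem_pIntegers hl⟩ with hx
  set y : pIntegers p := ⟨_, natCast_inv_mem_pIntegers hl'⟩ with hy
  have sub_eq : -y - x = N * (x * -y) := by
    have l_ne_zero : (l : ℚ) ≠ 0 := Nat.cast_ne_zero.2 fun h ↦ hl (h ▸ dvd_zero p)
    have sub_ne_zero : ((N - l : ℕ) : ℚ) ≠ 0 := Nat.cast_ne_zero.2 fun h ↦ hl' (h ▸ dvd_zero p)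
    ext
    simp only [hx, hy]
    push_cast [hlN] at sub_ne_zero ⊢
    field_simp
    ring
  have trapezoid := (pow_dvd_pow_of_dvd (Nat.cast_dvd_cast hN) 3).trans
    (pow_three_dvd_trapezoid sub_eq n)
  rw [hn.neg_pow, hn.add_one.neg_pow] at trapezoid
  have hdvd : (p : pIntegers p) ^ 3 ∣
      2 * (x ^ n + y ^ n) - -(n * N * (x ^ (n + 1) + y ^ (n + 1))) := by
    convert trapezoid using 1
    ring
  simpa [hx, hy, show ((2 : pIntegers p) : ℚ) = 2 from rfl] using sModEq_of_pow_dvd hdvd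

theorem two_mul_coprimeHarmonicSum_sModEq {n N : ℕ} (hp : 2 < p) (hn : Odd n) (hN : p ∣ N) :
    2 * coprimeHarmonicSum p N n ≡ -(n * N * coprimeHarmonicSum p N (n + 1))
      [SMOD pPowMultiples p 3] := by
  have hinv : ((2 : ℕ) : ℚ)⁻¹ ∈ pIntegers p := natCast_inv_mem_pIntegers_of_lt two_pos hp
  have sum_pairs_congr := SModEq.sum fun l (hl : l ∈ (Ico 1 N).filter (fun l ↦ ¬ p ∣ l)) ↦
    two_mul_inv_pow_add_sModEq hn hN (mem_filter.1 hl).2 (mem_Ico.1 (mem_filter.1 hl).1).2.le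
  simp only [sum_neg_distrib, ← mul_sum, sum_add_distrib, coprimeHarmonicSum_reflect hN]
    at sum_pairs_congr
  change 2 * (coprimeHarmonicSum p N n + coprimeHarmonicSum p N n) ≡
    -(n * N * (coprimeHarmonicSum p N (n + 1) + coprimeHarmonicSum p N (n + 1)))
    [SMOD pPowMultiples p 3] at sum_pairs_congr
  convert sModEq_mul_left hinv sum_pairs_congr using 1 <;> (push_cast; ring)

theorem coprimeHarmonicSum_sModEq_bernoulli_of_odd {n N : ℕ} (hn : Odd n) (hnp : n + 4 ≤ p)
    (hN : p ∣ N) :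
    coprimeHarmonicSum p N n ≡
      -(n * (n + 1) / (2 * (n + 2)) * bernoulli (p - n - 2) * N ^ 2) [SMOD pPowMultiples p 3] := by
  have hinv : ((2 : ℕ) : ℚ)⁻¹ ∈ pIntegers p := natCast_inv_mem_pIntegers_of_lt two_pos (by lia)
  have succ_congr := sModEq_natCast_mul_left hN
    (coprimeHarmonicSum_sModEq_bernoulli (n := n + 1) (by lia) (by lia) hN)
  rw [show p - (n + 1) - 1 = p - n - 2 by lia] at succ_congr
  have two_mul_congr := calc 2 * coprimeHarmonicSum p N n
    _ ≡ -(n * (N * coprimeHarmonicSum p N (n + 1))) [SMOD pPowMultiples p 3] := by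
        rw [← mul_assoc]
        exact two_mul_coprimeHarmonicSum_sModEq (by lia) hn hN
    _ ≡ -(n * (N * ((n + 1 : ℕ) / ((n + 1 : ℕ) + 1) * bernoulli (p - n - 2) * N)))
        [SMOD pPowMultiples p 3] := (sModEq_mul_left (natCast_mem _ n) succ_congr).neg
  convert sModEq_mul_left hinv two_mul_congr using 1 <;> (push_cast; field_simp)
  ring

end CoprimeHarmonicSum

theorem stmt_3 (p α b : ℕ) (hp : p.Prime) (hα : 1 ≤ α) (hαp : α ≤ p - 3) (hb : 1 ≤ b) :
    (Odd α → ratCong p 3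
      (∑ l ∈ (Finset.Ico 1 (b * p)).filter (fun l => ¬ p ∣ l), (1 : ℚ) / l ^ α)
      (-((b : ℚ) ^ 2 * α * (α + 1) / (2 * (α + 2))) * bernoulli (p - α - 2) * p ^ 2)) ∧
    (Even α → ratCong p 2
      (∑ l ∈ (Finset.Ico 1 (b * p)).filter (fun l => ¬ p ∣ l), (1 : ℚ) / l ^ α)
      (((b : ℚ) * α / (α + 1)) * bernoulli (p - α - 1) * p)) := by
  have := Fact.mk hp
  have p_dvd : p ∣ b * p := dvd_mul_left p b
  refine ⟨fun α_odd ↦ ratCong_iff_sModEq.2 ?_, fun _ ↦ ratCong_iff_sModEq.2 ?_⟩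
  · have p_odd : Odd p := hp.odd_of_ne_two (by lia)
    convert coprimeHarmonicSum_sModEq_bernoulli_of_odd α_odd (by grind : α + 4 ≤ p) p_dvd using 1
    · rfl
    · push_cast
      ring
  · convert coprimeHarmonicSum_sModEq_bernoulli hα (by lia) p_dvd using 1
    · rfl
    · push_cast
      ring
end

section
/- Let n be an even integer and p > n+2 a prime. Then the sum of 1/(l_1⋯l_n) over all n-tuples of positive integers with l_1+⋯+l_n = 2p and each l_i coprime to p is congruent modulo p to (n!/2)·Σ_{a odd, 3 ≤ a ≤ n-3} B_{p-a}·B_{p-n+a}/(a(n-a)). -/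
/-!
Let `L = -log (1 - X)` and let `F` be its part with exponents prime to `p`, so that the sum in
question is `[X ^ (2 * p)] F ^ n`, and `F` agrees with `L - X ^ p / p` below degree `2 * p`.
Differentiating `L ^ n` gives `[X ^ N] L ^ n = n! / N * e_{n-1}(1, 1/2, …, 1/(N-1))`. With
`e_k = e_k(1, 1/2, …, 1/(p-1))`, and `E_k` the analogue for the reciprocals of the integers in
`[1, 2 * p)` other than `p`, it follows for `n > 2` that the sum equals
`n! / (2 * p ^ 2) * (p * E_{n-1} + E_{n-2} - 2 * e_{n-2})`.

The polynomial `Q = ∏ (1 + X / j)`, `0 < j < p`, satisfies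
`(X + 1) * Q(X + 1) - X * Q(X) = p * Q(X)`. Solving this difference equation by Bernoulli
polynomials gives Glaisher's congruence `e_k ≡ -p * B_{p-1-k} / (k + 1) mod p ^ 2`. Moreover
`∑ E_k X ^ k` is, up to a constant, the Taylor shift by `p` of the even polynomial `Q(X) * Q(-X)`,
whence `E_k ≡ 0 mod p ^ 2` for odd `k`, and
`E_k ≡ [X ^ k] Q(X) * Q(-X) = 2 * e_k + ∑ (-1) ^ (k - i) * e_i * e_{k-i} mod p ^ 3` for even
`k > 0`.
-/

section

open Finset
open Polynomial (X C)
open scoped Polynomial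

/-- The subgroup `p ^ r ℤ_(p)` of `ℚ`, for an arbitrary integer `r`: the rationals of `p`-adic
valuation at least `r`. All congruences are expressed as membership of a difference. -/
def padicFiltration (p : ℕ) [Fact p.Prime] (r : ℤ) : AddSubgroup ℚ :=
  (Rat.padicValuation p).leAddSubgroup (WithZero.exp (-r))

namespace padicFiltration

variable {p : ℕ} [Fact p.Prime] {r s : ℤ} {x y a b : ℚ}

theorem mem_iff : x ∈ padicFiltration p r ↔ Rat.padicValuation p x ≤ WithZero.exp (-r) :=
  Iff.rfl

theorem mem_zero_iff : x ∈ padicFiltration p 0 ↔ ¬ p ∣ x.den := by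
  rw [mem_iff, neg_zero, WithZero.exp_zero, Rat.padicValuation_le_one_iff]

theorem antitone : Antitone (padicFiltration p) := fun _ _ h =>
  Valuation.leAddSubgroup_monotone _ (WithZero.exp_le_exp.2 (neg_le_neg h))

theorem mul_mem (hx : x ∈ padicFiltration p r) (hy : y ∈ padicFiltration p s) :
    x * y ∈ padicFiltration p (r + s) := by
  rw [mem_iff, map_mul, neg_add, WithZero.exp_add]
  exact mul_le_mul' hx hy

theorem mul_mem_of_left (hx : x ∈ padicFiltration p 0) (hy : y ∈ padicFiltration p r) :
    x * y ∈ padicFiltration p r := by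
  simpa only [zero_add] using mul_mem hx hy

theorem mul_mem_of_right (hx : x ∈ padicFiltration p r) (hy : y ∈ padicFiltration p 0) :
    x * y ∈ padicFiltration p r := by
  simpa only [add_zero] using mul_mem hx hy

theorem intCast_mem (m : ℤ) : (m : ℚ) ∈ padicFiltration p 0 := by
  rw [mem_zero_iff, Rat.den_intCast]
  exact (Fact.out : p.Prime).one_lt.ne' ∘ Nat.dvd_one.1

theorem natCast_mem (m : ℕ) : (m : ℚ) ∈ padicFiltration p 0 := by
  exact_mod_cast intCast_mem (p := p) m

theorem zpow_self_mem (r : ℤ) : (p : ℚ) ^ r ∈ padicFiltration p r := by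
  rw [mem_iff, map_zpow₀, Rat.padicValuation_self, ← WithZero.exp_zsmul, smul_eq_mul, mul_neg_one]

theorem pow_self_mem (m : ℕ) : (p : ℚ) ^ m ∈ padicFiltration p m := by
  exact_mod_cast zpow_self_mem (p := p) m

theorem self_mem : (p : ℚ) ∈ padicFiltration p 1 := by
  simpa using zpow_self_mem (p := p) 1

theorem mem_iff_exists :
    x ∈ padicFiltration p r ↔ ∃ z ∈ padicFiltration p 0, x = (p : ℚ) ^ r * z := by
  have hp : (p : ℚ) ≠ 0 := Nat.cast_ne_zero.2 (Fact.out : p.Prime).ne_zero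
  constructor
  · intro hx
    refine ⟨p ^ (-r) * x, ?_, ?_⟩
    · simpa only [neg_add_cancel] using mul_mem (zpow_self_mem (p := p) (-r)) hx
    · rw [← mul_assoc, ← zpow_add₀ hp, add_neg_cancel, zpow_zero, one_mul]
  · rintro ⟨z, hz, rfl⟩
    exact mul_mem_of_right (zpow_self_mem r) hz

theorem intCast_mem_one_of_dvd {m : ℤ} (h : (p : ℤ) ∣ m) : (m : ℚ) ∈ padicFiltration p 1 := by
  obtain ⟨k, rfl⟩ := h
  exact mem_iff_exists.2 ⟨k, intCast_mem k, by push_cast; rw [zpow_one]⟩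

theorem inv_natCast_mem {m : ℕ} (hm : ¬ p ∣ m) : (m : ℚ)⁻¹ ∈ padicFiltration p 0 := by
  have h := Int.padicValuation_eq_one_iff.2 (mt Int.natCast_dvd_natCast.1 hm)
  rw [← Rat.padicValuation_cast, Int.cast_natCast] at h
  rw [mem_iff, map_inv₀, h, inv_one, neg_zero, WithZero.exp_zero]

theorem mul_sub_mul_mem (hx : x ∈ padicFiltration p r) (hb : b ∈ padicFiltration p r)
    (hxa : x - a ∈ padicFiltration p s) (hyb : y - b ∈ padicFiltration p s) :
    x * y - a * b ∈ padicFiltration p (r + s) := by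
  have h := add_mem (mul_mem hx hyb) (add_comm s r ▸ mul_mem hxa hb)
  convert h using 1
  ring

end padicFiltration

theorem ratCong_iff_sub_mem {p : ℕ} [Fact p.Prime] {r : ℕ} {x y : ℚ} :
    ratCong p r x y ↔ x - y ∈ padicFiltration p r := by
  simp only [ratCong, padicFiltration.mem_iff_exists (r := (r : ℤ)),
    padicFiltration.mem_zero_iff, zpow_natCast, and_comm]

section ClassicalCongruences

variable {p : ℕ} [Fact p.Prime]

theorem bernoulli_mem_padicFiltration {k : ℕ} (hk : k + 1 < p) :
    bernoulli k ∈ padicFiltration p 0 := by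
  have inv_mem {m : ℕ} (h0 : 0 < m) (hm : m < p) : (m : ℚ)⁻¹ ∈ padicFiltration p 0 :=
    padicFiltration.inv_natCast_mem (Nat.not_dvd_of_pos_of_lt h0 hm)
  obtain ⟨j, rfl⟩ | hodd := Nat.even_or_odd k
  · obtain ⟨m, hm⟩ := Bernoulli.vonStaudt_clausen j
    rw [← two_mul, eq_sub_of_add_eq hm.symm]
    refine sub_mem (padicFiltration.intCast_mem m) (sum_mem fun q hq => ?_)
    obtain ⟨hqk, hq, -⟩ := mem_filter.1 hq
    rw [one_div]
    exact inv_mem hq.pos (by have := mem_range.1 hqk; lia)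
  · obtain rfl | hk1 := eq_or_ne k 1
    · rw [bernoulli_one, neg_div, one_div]
      exact neg_mem (inv_mem two_pos hk)
    · rw [bernoulli_eq_zero_of_odd hodd (by obtain ⟨j, rfl⟩ := hodd; lia)]
      exact zero_mem _

theorem prime_sub_one_choose_sub_neg_one_pow_mem {k : ℕ} (hk : k < p) :
    ((p - 1).choose k : ℚ) - (-1) ^ k ∈ padicFiltration p 1 := by
  have hp : p.Prime := Fact.out
  induction k with
  | zero => simp
  | succ k ih =>
    have hdvd : (p : ℤ) ∣ (p.choose (k + 1) : ℤ) :=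
      mod_cast hp.dvd_choose_self k.succ_ne_zero hk
    have h := sub_mem (padicFiltration.intCast_mem_one_of_dvd hdvd) (ih (Nat.lt_of_succ_lt hk))
    have hpascal : p.choose (k + 1) = (p - 1).choose k + (p - 1).choose (k + 1) := by
      rw [← Nat.choose_succ_succ', Nat.sub_add_cancel hp.one_le]
    rw [hpascal] at h
    convert h using 1
    push_cast
    ring

theorem prod_inv_Ico_add_one_mem :
    ∏ j ∈ Ico 1 p, (j : ℚ)⁻¹ + 1 ∈ padicFiltration p 1 := by
  have hp : p.Prime := Fact.out
  have hfac : ∏ j ∈ Ico 1 p, (j : ℚ)⁻¹ = ((p - 1).factorial : ℚ)⁻¹ := by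
    rw [prod_inv_distrib, ← Nat.cast_prod, ← prod_Ico_id_eq_factorial, Nat.sub_add_cancel hp.one_le]
  have hndvd : ¬ p ∣ (p - 1).factorial := by
    rw [hp.dvd_factorial]
    have := hp.pos
    lia
  have hwilson : (p : ℤ) ∣ (p - 1).factorial + 1 := by
    rw [← ZMod.intCast_zmod_eq_zero_iff_dvd]
    push_cast
    rw [ZMod.wilsons_lemma, neg_add_cancel]
  have h := padicFiltration.mul_mem_of_right
    (padicFiltration.intCast_mem_one_of_dvd hwilson) (padicFiltration.inv_natCast_mem hndvd)
  rw [hfac]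
  convert h using 1
  have := Nat.factorial_ne_zero (p - 1)
  push_cast
  field_simp
  ring

end ClassicalCongruences

section PolynomialLemmas

/-- The forward difference of `B_{i+1}(X) / (i + 1)` is `X ^ i`, so the difference equation
determines `F` up to a constant. -/
theorem derivative_eq_sum_bernoulli {F g : ℚ[X]}
    (hFg : ∀ n : ℕ, F.eval (n + 1 : ℚ) = F.eval (n : ℚ) + g.eval (n : ℚ)) :
    Polynomial.derivative F = g.sum fun i a => C a * Polynomial.bernoulli i := by
  set S : ℚ[X] := g.sum fun i a => C (a / (i + 1)) * Polynomial.bernoulli (i + 1) with hS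
  have hdiff (x : ℚ) : S.eval (x + 1) = S.eval x + g.eval x := by
    simp only [hS, Polynomial.sum_def, Polynomial.eval_finsetSum, Polynomial.eval_mul,
      Polynomial.eval_C, g.eval_eq_sum, ← sum_add_distrib]
    refine sum_congr rfl fun i _ => ?_
    rw [add_comm x, Polynomial.bernoulli_eval_one_add, Nat.add_sub_cancel]
    push_cast
    field_simp
  have hconst (n : ℕ) : (F - S).eval (n : ℚ) = (F - S).eval 0 := by
    induction n with
    | zero => rw [Nat.cast_zero]
    | succ n ih =>
      rw [← ih, Nat.cast_succ, Polynomial.eval_sub, Polynomial.eval_sub, hFg, hdiff]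
      ring
  have hFS : F - S = C ((F - S).eval 0) := by
    refine Polynomial.eq_of_infinite_eval_eq _ _
      ((Set.infinite_range_of_injective (Nat.cast_injective (R := ℚ))).mono ?_)
    rintro _ ⟨n, rfl⟩
    rw [Set.mem_ofPred_eq, hconst, Polynomial.eval_C]
  rw [sub_eq_iff_eq_add.1 hFS, Polynomial.derivative_add, Polynomial.derivative_C, zero_add, hS,
    Polynomial.sum_def, Polynomial.derivative_sum, Polynomial.sum_def]
  refine sum_congr rfl fun i _ => ?_
  have hi : (i + 1 : ℚ[X]) = C (i + 1 : ℚ) := by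
    rw [Polynomial.C_add, Polynomial.C_1, map_natCast]
  rw [Polynomial.derivative_C_mul, Polynomial.derivative_bernoulli_add_one, ← mul_assoc, hi,
    ← Polynomial.C_mul, div_mul_cancel₀ _ (Nat.cast_add_one_ne_zero i)]

variable {R : Type*} [CommRing R]

theorem natDegree_one_add_C_mul_X_le (a : R) : (1 + C a * X).natDegree ≤ 1 := by
  rw [add_comm, ← Polynomial.C_1]
  exact Polynomial.natDegree_linear_le

theorem coeff_taylor_sub_coeff_mem (S : AddSubgroup R) (f : R[X]) (r : R) (k : ℕ)
    (hf : ∀ i, f.coeff (i + 1 + k) * r ^ (i + 1) ∈ S) :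
    (Polynomial.taylor r f).coeff k - f.coeff k ∈ S := by
  rw [Polynomial.taylor_coeff, Polynomial.eval_eq_sum_range, sum_range_succ',
    Polynomial.hasseDeriv_coeff, zero_add, Nat.choose_self, Nat.cast_one, one_mul, pow_zero,
    mul_one, add_sub_cancel_right]
  refine sum_mem fun i _ => ?_
  rw [Polynomial.hasseDeriv_coeff, mul_assoc, ← nsmul_eq_mul]
  exact nsmul_mem (hf i) _

theorem coeff_mul_of_coeff_zero_eq_zero {f g : R[X]} (hf : f.coeff 0 = 0) (hg : g.coeff 0 = 0)
    (m : ℕ) : (f * g).coeff m = ∑ i ∈ Ico 1 m, f.coeff i * g.coeff (m - i) := by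
  rw [Polynomial.coeff_mul, Finset.Nat.sum_antidiagonal_eq_sum_range_succ_mk]
  refine (sum_subset (fun i hi => ?_) fun i hi hi' => ?_).symm
  · have := mem_Ico.1 hi
    exact mem_range.2 (by lia)
  · have := mem_range.1 hi
    obtain rfl | h0 := eq_or_ne i 0
    · rw [hf, zero_mul]
    · have : m - i = 0 := by rw [mem_Ico] at hi'; lia
      simp only [this, hg, mul_zero]

theorem coeff_comp_neg_X (f : R[X]) (k : ℕ) : (f.comp (-X)).coeff k = f.coeff k * (-1) ^ k := by
  rw [← Polynomial.comp_C_mul_X_coeff, Polynomial.C_neg, Polynomial.C_1, neg_one_mul]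

/-- The even polynomial `f(X) f(-X)`, whose zeros are those of `f` and their negatives. -/
noncomputable def evenNorm (f : R[X]) : R[X] := f * f.comp (-X)

theorem coeff_zero_evenNorm (f : R[X]) : (evenNorm f).coeff 0 = f.coeff 0 ^ 2 := by
  rw [evenNorm, Polynomial.mul_coeff_zero, coeff_comp_neg_X, pow_zero, mul_one, sq]

theorem coeff_evenNorm_of_odd [IsAddTorsionFree R] (f : R[X]) {k : ℕ} (hk : Odd k) :
    (evenNorm f).coeff k = 0 := by
  have heven : (evenNorm f).comp (-X) = evenNorm f := by
    rw [evenNorm, Polynomial.mul_comp, Polynomial.comp_neg_X_comp_neg_X, mul_comm]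
  have h := coeff_comp_neg_X (evenNorm f) k
  rw [heven, hk.neg_one_pow, mul_neg_one] at h
  exact self_eq_neg.1 h

theorem coeff_evenNorm_of_even {f : R[X]} (hf : f.coeff 0 = 1) {k : ℕ} (hk : Even k) :
    (evenNorm f).coeff k = 2 * f.coeff k - (if k = 0 then 1 else 0) +
      ∑ i ∈ Ico 1 k, f.coeff i * ((-1) ^ (k - i) * f.coeff (k - i)) := by
  have hexpand : evenNorm f = f + f.comp (-X) - 1 + (f - 1) * (f.comp (-X) - 1) := by
    rw [evenNorm]
    ring
  rw [hexpand, Polynomial.coeff_add, coeff_mul_of_coeff_zero_eq_zero]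
  · simp only [Polynomial.coeff_sub, Polynomial.coeff_add, coeff_comp_neg_X, hk.neg_one_pow,
      Polynomial.coeff_one]
    congr 1
    · ring
    · refine sum_congr rfl fun i hi => ?_
      obtain ⟨h1, h2⟩ := mem_Ico.1 hi
      rw [if_neg (by lia), if_neg (by lia)]
      ring
  · rw [Polynomial.coeff_sub, hf, Polynomial.coeff_one_zero, sub_self]
  · rw [Polynomial.coeff_sub, coeff_comp_neg_X, hf, Polynomial.coeff_one_zero, pow_zero, mul_one,
      sub_self]

end PolynomialLemmas

/-- The polynomial `∏ j ∈ s, (1 + X / j)`, the generating function of the elementary symmetric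
functions of the reciprocals of the elements of `s`. An element `0` contributes the factor `1`. -/
noncomputable def recipPoly (s : Finset ℕ) : ℚ[X] := ∏ j ∈ s, (1 + C (j : ℚ)⁻¹ * X)

namespace recipPoly

theorem coeff_zero (s : Finset ℕ) : (recipPoly s).coeff 0 = 1 := by
  simp [recipPoly, Polynomial.coeff_zero_eq_eval_zero, Polynomial.eval_prod]

theorem eval_add_one (t : ℚ) {N : ℕ} (hN : 0 < N) :
    (t + 1) * (recipPoly (Ico 1 N)).eval (t + 1) = (t + N) * (recipPoly (Ico 1 N)).eval t := by
  induction N, hN using Nat.le_induction with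
  | base => simp [recipPoly]
  | succ N hN ih =>
    have hN0 : (N : ℚ) ≠ 0 := Nat.cast_ne_zero.2 (Nat.one_le_iff_ne_zero.1 hN)
    simp only [recipPoly, prod_Ico_succ_top hN, Polynomial.eval_mul, Polynomial.eval_add,
      Polynomial.eval_one, Polynomial.eval_C, Polynomial.eval_X] at ih ⊢
    rw [← mul_assoc, ih]
    push_cast
    field_simp
    ring

theorem natDegree_le (s : Finset ℕ) : (recipPoly s).natDegree ≤ #s := by
  rw [card_eq_sum_ones]
  exact (Polynomial.natDegree_prod_le _ _).trans
    (sum_le_sum fun _ _ => natDegree_one_add_C_mul_X_le _)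

theorem coeff_card (s : Finset ℕ) : (recipPoly s).coeff #s = ∏ j ∈ s, (j : ℚ)⁻¹ := by
  have h := Polynomial.coeff_prod_of_natDegree_le s (fun j : ℕ => 1 + C (j : ℚ)⁻¹ * X) 1
    fun _ _ => natDegree_one_add_C_mul_X_le _
  rw [mul_one] at h
  rw [recipPoly, h]
  simp [Polynomial.coeff_one]

theorem coeff_succ_insert {s : Finset ℕ} {a : ℕ} (ha : a ∉ s) (k : ℕ) :
    (recipPoly (insert a s)).coeff (k + 1) =
      (recipPoly s).coeff (k + 1) + (recipPoly s).coeff k / a := by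
  rw [recipPoly, prod_insert ha, add_mul, one_mul, mul_assoc, Polynomial.coeff_add,
    Polynomial.coeff_C_mul, Polynomial.coeff_X_mul, div_eq_inv_mul, recipPoly]

theorem coeff_succ_Ico (k N : ℕ) :
    (recipPoly (Ico 1 N)).coeff (k + 1) = ∑ j ∈ Ico 1 N, (recipPoly (Ico 1 j)).coeff k / j := by
  induction N with
  | zero => simp [recipPoly, Polynomial.coeff_one]
  | succ N ih =>
    obtain rfl | hN := N.eq_zero_or_pos
    · simp [recipPoly, Polynomial.coeff_one]
    · rw [sum_Ico_succ_top hN, ← ih, ← Finset.insert_Ico_right_eq_Ico_add_one hN,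
        coeff_succ_insert right_notMem_Ico]

/-- This is `derivative_eq_sum_bernoulli` on coefficients, as `X * recipPoly (Ico 1 N)` has forward
difference `N * recipPoly (Ico 1 N)`. -/
theorem add_one_mul_coeff_Ico {N : ℕ} (hN : 0 < N) (k : ℕ) :
    (k + 1) * (recipPoly (Ico 1 N)).coeff k =
      N * ∑ i ∈ range N, (recipPoly (Ico 1 N)).coeff i * (i.choose k * bernoulli (i - k)) := by
  set Q := recipPoly (Ico 1 N) with hQ
  have hdeg : (C (N : ℚ) * Q).natDegree < N := by
    refine (Polynomial.natDegree_C_mul_le _ _).trans_lt ((natDegree_le _).trans_lt ?_)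
    rw [Nat.card_Ico]
    exact Nat.sub_one_lt hN.ne'
  have hderiv := derivative_eq_sum_bernoulli (F := X * Q) (g := C (N : ℚ) * Q) fun t => by
    simp only [Polynomial.eval_mul, Polynomial.eval_X, Polynomial.eval_C]
    rw [hQ, eval_add_one t hN]
    ring
  rw [Polynomial.sum_over_range' _ (fun i => by rw [Polynomial.C_0, zero_mul]) N hdeg] at hderiv
  have hcoeff := congrArg (Polynomial.coeff · k) hderiv
  simp only [Polynomial.coeff_derivative, Polynomial.coeff_X_mul, Polynomial.finsetSum_coeff,
    Polynomial.coeff_C_mul, Polynomial.coeff_bernoulli] at hcoeff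
  rw [mul_comm, hcoeff, mul_sum]
  refine sum_congr rfl fun i _ => ?_
  split_ifs with hik
  · ring
  · rw [Nat.choose_eq_zero_of_lt (not_le.1 hik)]
    simp

theorem taylor_natCast {s : Finset ℕ} (hs : 0 ∉ s) (m : ℕ) :
    Polynomial.taylor (m : ℚ) (recipPoly s) =
      C ((recipPoly s).eval (m : ℚ)) * recipPoly (s.map (addRightEmbedding m)) := by
  simp only [recipPoly, Polynomial.taylor_apply, Polynomial.prod_comp, prod_map,
    Polynomial.eval_prod, map_prod, ← prod_mul_distrib]
  refine prod_congr rfl fun j hj => Polynomial.funext fun t => ?_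
  have hj0 : (j : ℚ) ≠ 0 := Nat.cast_ne_zero.2 (ne_of_mem_of_not_mem hj hs)
  have hjm : (j + m : ℚ) ≠ 0 := by positivity
  simp only [addRightEmbedding_apply, Nat.cast_add, Polynomial.eval_comp, Polynomial.eval_add,
    Polynomial.eval_mul, Polynomial.eval_one, Polynomial.eval_C, Polynomial.eval_X]
  field_simp
  ring

theorem taylor_comp_neg_X_Ico (N : ℕ) :
    Polynomial.taylor (N : ℚ) ((recipPoly (Ico 1 N)).comp (-X)) =
      C ((-1) ^ (N - 1)) * recipPoly (Ico 1 N) := by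
  refine Polynomial.funext fun t => ?_
  simp only [recipPoly, Polynomial.taylor_apply, Polynomial.eval_comp, Polynomial.eval_prod,
    Polynomial.eval_add, Polynomial.eval_mul, Polynomial.eval_neg, Polynomial.eval_one,
    Polynomial.eval_C, Polynomial.eval_X]
  have hj0 {j : ℕ} (hj : j ∈ Ico 1 N) : (j : ℚ) ≠ 0 := by
    have := (mem_Ico.1 hj).1
    positivity
  calc ∏ j ∈ Ico 1 N, (1 + (j : ℚ)⁻¹ * -(t + N))
      = ∏ j ∈ Ico 1 N, -1 * (j : ℚ)⁻¹ * (((N - j : ℕ) : ℚ) + t) :=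
        prod_congr rfl fun j hj => by
          rw [Nat.cast_sub (mem_Ico.1 hj).2.le]
          linear_combination -mul_inv_cancel₀ (hj0 hj)
    _ = ∏ j ∈ Ico 1 N, -1 * (j : ℚ)⁻¹ * (j + t) := by
        rw [prod_mul_distrib, prod_Ico_reflect (fun j => (j : ℚ) + t) 1 N.le_succ,
          Nat.add_sub_cancel_left, Nat.add_sub_cancel, ← prod_mul_distrib]
    _ = (-1) ^ (N - 1) * ∏ j ∈ Ico 1 N, (1 + (j : ℚ)⁻¹ * t) := by
        rw [← Nat.card_Ico, ← prod_const, ← prod_mul_distrib]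
        refine prod_congr rfl fun j hj => ?_
        linear_combination -mul_inv_cancel₀ (hj0 hj)

theorem Ico_two_mul_erase (N : ℕ) :
    recipPoly ((Ico 1 (2 * N)).erase N) =
      recipPoly (Ico 1 N) * recipPoly ((Ico 1 N).map (addRightEmbedding N)) := by
  rw [recipPoly, recipPoly, recipPoly, map_add_right_Ico, ← prod_union]
  · congr 1
    ext j
    simp only [mem_erase, mem_union, mem_Ico]
    lia
  · exact disjoint_left.2 fun j hj hj' => by
      rw [mem_Ico] at hj hj'
      lia

theorem taylor_evenNorm_Ico (N : ℕ) :
    Polynomial.taylor (N : ℚ) (evenNorm (recipPoly (Ico 1 N))) =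
      C ((-1) ^ (N - 1) * (recipPoly (Ico 1 N)).eval (N : ℚ)) *
        recipPoly ((Ico 1 (2 * N)).erase N) := by
  rw [evenNorm, Polynomial.taylor_mul, taylor_natCast (by simp), taylor_comp_neg_X_Ico,
    Ico_two_mul_erase, Polynomial.C_mul]
  ring

theorem coeff_mem_padicFiltration {p : ℕ} [Fact p.Prime] {s : Finset ℕ} (hs : ∀ j ∈ s, ¬ p ∣ j)
    (k : ℕ) : (recipPoly s).coeff k ∈ padicFiltration p 0 := by
  induction s using Finset.induction_on generalizing k with
  | empty =>
    rw [recipPoly, prod_empty, Polynomial.coeff_one]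
    split_ifs
    · exact_mod_cast padicFiltration.natCast_mem 1
    · exact zero_mem _
  | insert a s ha ih =>
    have hs' := fun j hj => hs j (mem_insert_of_mem hj)
    cases k with
    | zero =>
      rw [coeff_zero]
      exact_mod_cast padicFiltration.natCast_mem 1
    | succ k =>
      rw [coeff_succ_insert ha, div_eq_mul_inv]
      exact add_mem (ih hs' _) (padicFiltration.mul_mem_of_left (ih hs' _)
        (padicFiltration.inv_natCast_mem (hs a (mem_insert_self a s))))

end recipPoly

/-- The number `B_{p-1-k} / (k + 1)` in Glaisher's congruence: the `k`-th elementary symmetric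
function of `1, 1/2, …, 1/(p-1)` is congruent to `-p` times it modulo `p ^ 2`. -/
noncomputable def glaisherQuotient (p k : ℕ) : ℚ := bernoulli (p - 1 - k) / (k + 1)

section GlaisherCongruences

variable {p : ℕ} [Fact p.Prime] {k : ℕ}

theorem inv_natCast_add_one_mem (hk : k + 1 < p) : (k + 1 : ℚ)⁻¹ ∈ padicFiltration p 0 := by
  exact_mod_cast padicFiltration.inv_natCast_mem (Nat.not_dvd_of_pos_of_lt k.succ_pos hk)

theorem glaisherQuotient_mem (hk0 : k ≠ 0) (hk : k + 1 < p) :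
    glaisherQuotient p k ∈ padicFiltration p 0 := by
  rw [glaisherQuotient, div_eq_mul_inv]
  exact padicFiltration.mul_mem_of_left (bernoulli_mem_padicFiltration (by lia))
    (inv_natCast_add_one_mem hk)

theorem glaisherQuotient_eq_zero_of_odd (hodd : Odd k) (hk : k + 2 < p) :
    glaisherQuotient p k = 0 := by
  have hp : Odd p := (Fact.out : p.Prime).odd_of_ne_two (by lia)
  have hodd' : Odd (p - 1 - k) := by
    obtain ⟨a, rfl⟩ := hp
    obtain ⟨b, rfl⟩ := hodd
    exact ⟨a - b - 1, by lia⟩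
  rw [glaisherQuotient, bernoulli_eq_zero_of_odd hodd' (by lia), zero_div]

theorem neg_one_pow_mul_glaisherQuotient (hk : k + 2 < p) :
    (-1) ^ k * glaisherQuotient p k = glaisherQuotient p k := by
  obtain heven | hodd := k.even_or_odd
  · rw [heven.neg_one_pow, one_mul]
  · rw [glaisherQuotient_eq_zero_of_odd hodd hk, mul_zero]

theorem coeff_recipPoly_Ico_mem (k : ℕ) :
    (recipPoly (Ico 1 p)).coeff k ∈ padicFiltration p 0 :=
  recipPoly.coeff_mem_padicFiltration
    (fun _ hj => Nat.not_dvd_of_pos_of_lt (mem_Ico.1 hj).1 (mem_Ico.1 hj).2) k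

theorem coeff_recipPoly_Ico_mem_one (hk0 : k ≠ 0) (hk : k + 1 < p) :
    (recipPoly (Ico 1 p)).coeff k ∈ padicFiltration p 1 := by
  have hsum : ∑ i ∈ range p, (recipPoly (Ico 1 p)).coeff i * (i.choose k * bernoulli (i - k)) ∈
      padicFiltration p 0 :=
    sum_mem fun i hi => padicFiltration.mul_mem_of_left (coeff_recipPoly_Ico_mem i)
      (padicFiltration.mul_mem_of_left (padicFiltration.natCast_mem _)
        (bernoulli_mem_padicFiltration (by have := mem_range.1 hi; lia)))
  have h := padicFiltration.mul_mem_of_left (inv_natCast_add_one_mem hk)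
    (padicFiltration.mul_mem_of_right padicFiltration.self_mem hsum)
  rwa [← recipPoly.add_one_mul_coeff_Ico (by lia), inv_mul_cancel_left₀ (by positivity)] at h

theorem coeff_sub_one_mul_choose_add_mem (hk : k < p) :
    (recipPoly (Ico 1 p)).coeff (p - 1) * (p - 1).choose k + (-1) ^ k ∈ padicFiltration p 1 := by
  have hwilson := prod_inv_Ico_add_one_mem (p := p)
  rw [← recipPoly.coeff_card, Nat.card_Ico] at hwilson
  have h := sub_mem
    (padicFiltration.mul_mem_of_right hwilson (padicFiltration.natCast_mem ((p - 1).choose k)))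
    (prime_sub_one_choose_sub_neg_one_pow_mem hk)
  convert h using 1
  ring

theorem coeff_recipPoly_Ico_add_mem_two (hk0 : k ≠ 0) (hk : k + 2 < p) :
    (recipPoly (Ico 1 p)).coeff k + p * glaisherQuotient p k ∈ padicFiltration p 2 := by
  have hlow : ∑ i ∈ range (p - 1),
      (recipPoly (Ico 1 p)).coeff i * (i.choose k * bernoulli (i - k)) ∈ padicFiltration p 1 := by
    refine sum_mem fun i hi => ?_
    have hi := mem_range.1 hi
    obtain rfl | hi0 := eq_or_ne i 0
    · rw [Nat.choose_eq_zero_of_lt (Nat.pos_of_ne_zero hk0)]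
      simp
    · exact padicFiltration.mul_mem_of_right (coeff_recipPoly_Ico_mem_one hi0 (by lia))
        (padicFiltration.mul_mem_of_left (padicFiltration.natCast_mem _)
          (bernoulli_mem_padicFiltration (by lia)))
  have hsplit := recipPoly.add_one_mul_coeff_Ico (N := p) (by lia) k
  rw [← Nat.sub_add_cancel (show 1 ≤ p by lia), sum_range_succ, Nat.sub_add_cancel (by lia)]
    at hsplit
  have h := padicFiltration.mul_mem_of_left (inv_natCast_add_one_mem (show k + 1 < p by lia))
    (padicFiltration.mul_mem padicFiltration.self_mem (add_mem hlow
      (padicFiltration.mul_mem_of_right (coeff_sub_one_mul_choose_add_mem (show k < p by lia))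
        (bernoulli_mem_padicFiltration (k := p - 1 - k) (by lia)))))
  rw [one_add_one_eq_two] at h
  convert h using 1
  rw [← neg_one_pow_mul_glaisherQuotient hk, glaisherQuotient]
  linear_combination (k + 1 : ℚ)⁻¹ * hsplit -
    (recipPoly (Ico 1 p)).coeff k * mul_inv_cancel₀ (Nat.cast_add_one_ne_zero (R := ℚ) k)

end GlaisherCongruences

section DeletedPolynomial

variable {p : ℕ} [Fact p.Prime] {k : ℕ}

theorem coeff_evenNorm_recipPoly_mem (k : ℕ) :
    (evenNorm (recipPoly (Ico 1 p))).coeff k ∈ padicFiltration p 0 := by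
  rw [evenNorm, Polynomial.coeff_mul]
  refine sum_mem fun x _ => padicFiltration.mul_mem_of_left (coeff_recipPoly_Ico_mem _) ?_
  rw [coeff_comp_neg_X]
  exact padicFiltration.mul_mem_of_left (coeff_recipPoly_Ico_mem _)
    (by exact_mod_cast padicFiltration.intCast_mem (p := p) ((-1) ^ x.2))

theorem coeff_evenNorm_recipPoly_mem_one (hk0 : k ≠ 0) (hk : k + 1 < p) :
    (evenNorm (recipPoly (Ico 1 p))).coeff k ∈ padicFiltration p 1 := by
  obtain heven | hodd := k.even_or_odd
  · rw [coeff_evenNorm_of_even (recipPoly.coeff_zero _) heven, if_neg hk0, sub_zero]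
    refine add_mem (padicFiltration.mul_mem_of_left
      (mod_cast padicFiltration.natCast_mem 2) (coeff_recipPoly_Ico_mem_one hk0 hk)) ?_
    refine sum_mem fun i hi => ?_
    obtain ⟨hi1, hik⟩ := mem_Ico.1 hi
    exact padicFiltration.mul_mem_of_right (coeff_recipPoly_Ico_mem_one (by lia) (by lia))
      (padicFiltration.mul_mem_of_left
        (mod_cast padicFiltration.intCast_mem (p := p) ((-1) ^ (k - i)))
        (coeff_recipPoly_Ico_mem _))
  · rw [coeff_evenNorm_of_odd _ hodd]
    exact zero_mem _

theorem coeff_evenNorm_recipPoly_mul_pow_mem_add_one (hk : k ≠ 0) (hkp : k + 1 < p) {r : ℕ} :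
    (evenNorm (recipPoly (Ico 1 p))).coeff k * (p : ℚ) ^ r ∈ padicFiltration p (r + 1) := by
  rw [add_comm]
  exact padicFiltration.mul_mem (coeff_evenNorm_recipPoly_mem_one hk hkp)
    (padicFiltration.pow_self_mem r)

theorem coeff_evenNorm_recipPoly_mul_pow_mem {r : ℕ} {s : ℤ} (hrs : s ≤ r) :
    (evenNorm (recipPoly (Ico 1 p))).coeff k * (p : ℚ) ^ r ∈ padicFiltration p s :=
  padicFiltration.antitone hrs (padicFiltration.mul_mem_of_left (coeff_evenNorm_recipPoly_mem k)
    (padicFiltration.pow_self_mem r))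

theorem coeff_taylor_evenNorm_mem_two (hodd : Odd k) (hk : k + 2 < p) :
    (Polynomial.taylor (p : ℚ) (evenNorm (recipPoly (Ico 1 p)))).coeff k ∈
      padicFiltration p 2 := by
  have h := coeff_taylor_sub_coeff_mem (padicFiltration p 2) (evenNorm (recipPoly (Ico 1 p))) p k
    fun i => by
      obtain rfl | hi := i.eq_zero_or_pos
      · exact coeff_evenNorm_recipPoly_mul_pow_mem_add_one (by lia) (by lia)
      · exact coeff_evenNorm_recipPoly_mul_pow_mem (by lia)
  rwa [coeff_evenNorm_of_odd _ hodd, sub_zero] at h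

theorem coeff_taylor_evenNorm_sub_mem_three (heven : Even k) (hk : k + 3 < p) :
    (Polynomial.taylor (p : ℚ) (evenNorm (recipPoly (Ico 1 p)))).coeff k -
      (evenNorm (recipPoly (Ico 1 p))).coeff k ∈ padicFiltration p 3 :=
  coeff_taylor_sub_coeff_mem _ _ _ _ fun i => by
    obtain rfl | rfl | hi : i = 0 ∨ i = 1 ∨ 1 < i := by lia
    · rw [coeff_evenNorm_of_odd _ (by simpa [add_comm] using heven.add_one), zero_mul]
      exact zero_mem _
    · exact coeff_evenNorm_recipPoly_mul_pow_mem_add_one (by lia) (by lia)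
    · exact coeff_evenNorm_recipPoly_mul_pow_mem (by lia)

theorem coeff_recipPoly_erase_sub_taylor_mem (hp : 3 < p) (k : ℕ) :
    (recipPoly ((Ico 1 (2 * p)).erase p)).coeff k -
      (Polynomial.taylor (p : ℚ) (evenNorm (recipPoly (Ico 1 p)))).coeff k ∈
        padicFiltration p 3 := by
  have hc := coeff_taylor_evenNorm_sub_mem_three (p := p) Even.zero (by lia)
  rw [coeff_zero_evenNorm, recipPoly.coeff_zero, one_pow, recipPoly.taylor_evenNorm_Ico,
    Polynomial.coeff_C_mul, recipPoly.coeff_zero, mul_one] at hc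
  have hE : (recipPoly ((Ico 1 (2 * p)).erase p)).coeff k ∈ padicFiltration p 0 :=
    recipPoly.coeff_mem_padicFiltration (fun j hj hpj => by
      obtain ⟨hjp, hj⟩ := mem_erase.1 hj
      obtain ⟨hj0, hj2⟩ := mem_Ico.1 hj
      exact hjp (Nat.eq_of_dvd_of_lt_two_mul (by lia) hpj hj2)) k
  have h := neg_mem (padicFiltration.mul_mem_of_right hc hE)
  rw [recipPoly.taylor_evenNorm_Ico, Polynomial.coeff_C_mul]
  convert h using 1
  ring

theorem coeff_recipPoly_erase_mem_two (hodd : Odd k) (hk : k + 2 < p) :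
    (recipPoly ((Ico 1 (2 * p)).erase p)).coeff k ∈ padicFiltration p 2 := by
  have hE := coeff_recipPoly_erase_sub_taylor_mem (p := p) (by have := hodd.pos; lia) k
  rw [← sub_add_cancel ((recipPoly ((Ico 1 (2 * p)).erase p)).coeff k)]
  exact add_mem (padicFiltration.antitone (by lia) hE) (coeff_taylor_evenNorm_mem_two hodd hk)

theorem coeff_mul_coeff_sub_glaisherQuotient_mem {i j : ℕ} (hi0 : i ≠ 0) (hi : i + 2 < p)
    (hj0 : j ≠ 0) (hj : j + 2 < p) :
    (recipPoly (Ico 1 p)).coeff i * ((-1) ^ j * (recipPoly (Ico 1 p)).coeff j) -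
      p ^ 2 * (glaisherQuotient p i * glaisherQuotient p j) ∈ padicFiltration p 3 := by
  have hsign : ((-1) ^ j : ℚ) ∈ padicFiltration p 0 :=
    mod_cast padicFiltration.intCast_mem (p := p) ((-1) ^ j)
  have hei := coeff_recipPoly_Ico_add_mem_two hi0 hi
  have hej := padicFiltration.mul_mem_of_left hsign (coeff_recipPoly_Ico_add_mem_two hj0 hj)
  rw [mul_add, mul_left_comm, neg_one_pow_mul_glaisherQuotient hj] at hej
  have hcj := neg_mem (padicFiltration.mul_mem_of_right (padicFiltration.self_mem (p := p))
    (glaisherQuotient_mem hj0 (by lia)))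
  rw [← sub_neg_eq_add] at hei hej
  have h := padicFiltration.mul_sub_mul_mem (coeff_recipPoly_Ico_mem_one hi0 (by lia)) hcj hei hej
  rw [show (1 + 2 : ℤ) = 3 from rfl] at h
  convert h using 1
  ring

theorem coeff_recipPoly_erase_sub_mem_three (heven : Even k) (hk : k + 3 < p) :
    (recipPoly ((Ico 1 (2 * p)).erase p)).coeff k - 2 * (recipPoly (Ico 1 p)).coeff k +
      (if k = 0 then 1 else 0) -
      p ^ 2 * ∑ i ∈ Ico 1 k, glaisherQuotient p i * glaisherQuotient p (k - i) ∈
        padicFiltration p 3 := by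
  have hG := add_mem (coeff_recipPoly_erase_sub_taylor_mem (p := p) (by lia) k)
    (coeff_taylor_evenNorm_sub_mem_three heven hk)
  rw [sub_add_sub_cancel, coeff_evenNorm_of_even (recipPoly.coeff_zero _) heven] at hG
  have hsum := sum_mem (S := padicFiltration p 3) fun i (hi : i ∈ Ico 1 k) =>
    coeff_mul_coeff_sub_glaisherQuotient_mem (p := p) (i := i) (j := k - i)
      (by grind) (by grind) (by grind) (by grind)
  rw [sum_sub_distrib, ← mul_sum] at hsum
  convert add_mem hG hsum using 1
  ring

end DeletedPolynomial

/-- The power series `-log(1 - X)`. The constant term `(0 : ℚ)⁻¹` is `0`, as it should be. -/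
noncomputable def negLogOneSub : PowerSeries ℚ := PowerSeries.mk fun k => (k : ℚ)⁻¹

/-- The part of `-log(1 - X)` supported on the exponents prime to `p`, whose powers are the
generating functions of the sums `hsum`. -/
noncomputable def negLogOneSubCoprime (p : ℕ) : PowerSeries ℚ :=
  PowerSeries.mk fun k => if p ∣ k then 0 else (k : ℚ)⁻¹

section Logarithm

open PowerSeries (coeff)

theorem hsum_eq_coeff (p n N : ℕ) : hsum p n N = coeff N (negLogOneSubCoprime p ^ n) := by
  have hprod : negLogOneSubCoprime p ^ n = ∏ _i : Fin n, negLogOneSubCoprime p := by simp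
  have hsupport : ∀ l ∈ finsuppAntidiag (univ : Finset (Fin n)) N,
      ∏ i, coeff (l i) (negLogOneSubCoprime p) ≠ 0 → ∀ i, ¬ p ∣ l i := by
    intro l _ hne i hd
    refine hne (prod_eq_zero (mem_univ i) ?_)
    rw [negLogOneSubCoprime, PowerSeries.coeff_mk, if_pos hd]
  rw [hprod, PowerSeries.coeff_prod, hsum, ← sum_filter_of_ne hsupport]
  refine sum_bij' (fun l _ => Finsupp.equivFunOnFinite.symm l) (fun l _ => (l : Fin n → ℕ))
    (fun l hl => ?_) (fun l hl => ?_) (fun _ _ => rfl) (fun _ _ => by ext; rfl) fun l hl => ?_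
  · obtain ⟨-, hsum, hl⟩ := mem_filter.1 hl
    exact mem_filter.2 ⟨mem_finsuppAntidiag.2 ⟨hsum, subset_univ _⟩, hl⟩
  · obtain ⟨hanti, hl⟩ := mem_filter.1 hl
    have hsum := (mem_finsuppAntidiag.1 hanti).1
    refine mem_filter.2 ⟨Fintype.mem_piFinset.2 fun i => mem_Icc.2 ⟨?_, ?_⟩, hsum, hl⟩
    · exact Nat.pos_of_ne_zero fun h0 => hl i (h0 ▸ dvd_zero p)
    · exact hsum ▸ single_le_sum (fun _ _ => Nat.zero_le _) (mem_univ i)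
  · refine prod_congr rfl fun i _ => ?_
    rw [negLogOneSubCoprime, PowerSeries.coeff_mk, Finsupp.equivFunOnFinite_symm_apply_apply,
      if_neg ((mem_filter.1 hl).2.2 i), one_div]

theorem constantCoeff_negLogOneSub : PowerSeries.constantCoeff negLogOneSub = 0 := by
  simp [negLogOneSub, ← PowerSeries.coeff_zero_eq_constantCoeff_apply]

theorem derivative_negLogOneSub :
    PowerSeries.derivative ℚ negLogOneSub = PowerSeries.mk 1 := by
  ext n
  rw [PowerSeries.coeff_derivative, negLogOneSub, PowerSeries.coeff_mk, PowerSeries.coeff_mk,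
    Nat.cast_add_one, inv_mul_cancel₀ (Nat.cast_add_one_ne_zero n), Pi.one_apply]

theorem coeff_negLogOneSub_pow_succ (n N : ℕ) :
    coeff N (negLogOneSub ^ (n + 1)) = (n + 1) / N * ∑ j ∈ range N, coeff j (negLogOneSub ^ n) := by
  cases N with
  | zero => simp [constantCoeff_negLogOneSub]
  | succ N =>
    have h := congrArg (coeff N) (PowerSeries.derivative_pow negLogOneSub (n + 1))
    rw [derivative_negLogOneSub, PowerSeries.coeff_derivative, mul_assoc,
      ← map_natCast (PowerSeries.C (R := ℚ)), PowerSeries.coeff_C_mul, PowerSeries.coeff_mul,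
      Nat.sum_antidiagonal_eq_sum_range_succ_mk] at h
    simp only [PowerSeries.coeff_mk, Pi.one_apply, mul_one, Nat.add_sub_cancel] at h
    rw [div_mul_eq_mul_div, eq_div_iff (Nat.cast_ne_zero.2 N.succ_ne_zero)]
    exact_mod_cast h

theorem coeff_negLogOneSub_pow (n N : ℕ) :
    coeff N (negLogOneSub ^ (n + 1)) =
      (n + 1).factorial / N * (recipPoly (Ico 1 N)).coeff n := by
  induction n generalizing N with
  | zero =>
    rw [zero_add, pow_one, recipPoly.coeff_zero, negLogOneSub, PowerSeries.coeff_mk]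
    simp
  | succ n ih =>
    have hsum : ∑ j ∈ range N, coeff j (negLogOneSub ^ (n + 1)) =
        (n + 1).factorial * (recipPoly (Ico 1 N)).coeff (n + 1) := by
      rw [recipPoly.coeff_succ_Ico, mul_sum]
      refine (sum_subset_zero_on_sdiff (fun j hj => mem_range.2 (mem_Ico.1 hj).2)
        (fun j hj => ?_) fun j _ => ?_).symm
      · obtain rfl : j = 0 := by grind
        simp [constantCoeff_negLogOneSub]
      · rw [ih, mul_div_assoc', div_mul_eq_mul_div]
    rw [coeff_negLogOneSub_pow_succ, hsum, Nat.factorial_succ (n + 1)]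
    push_cast
    ring

theorem exists_negLogOneSubCoprime_eq {p : ℕ} (hp : 0 < p) :
    ∃ M : PowerSeries ℚ, negLogOneSubCoprime p =
      negLogOneSub - PowerSeries.X ^ p * (PowerSeries.C (p : ℚ)⁻¹ + PowerSeries.X ^ p * M) := by
  have hdvd : PowerSeries.X ^ (2 * p) ∣ negLogOneSub - negLogOneSubCoprime p -
      PowerSeries.C (p : ℚ)⁻¹ * PowerSeries.X ^ p := by
    refine PowerSeries.X_pow_dvd_iff.2 fun k hk => ?_
    simp only [negLogOneSub, negLogOneSubCoprime, map_sub, PowerSeries.coeff_mk,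
      PowerSeries.coeff_C_mul, PowerSeries.coeff_X_pow]
    obtain rfl | hk0 := eq_or_ne k 0
    · simp [hp.ne]
    · by_cases hpk : p ∣ k
      · simp [← Nat.eq_of_dvd_of_lt_two_mul hk0 hpk hk]
      · have hkp : k ≠ p := fun h => hpk h.symm.dvd
        simp [hpk, hkp]
  obtain ⟨M, hM⟩ := hdvd
  exact ⟨M, by rw [two_mul, pow_add] at hM; linear_combination -hM⟩

theorem cube_dvd_sub_pow_sub {R : Type*} [CommRing R] (f g : R) (m : ℕ) :
    g ^ 3 ∣ (f - g) ^ (m + 2) - (f ^ (m + 2) - (m + 2) • (f ^ (m + 1) * g) +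
      (m + 2).choose 2 • (f ^ m * g ^ 2)) := by
  have htail : g ^ 3 ∣ ∑ k ∈ range m,
      (-g) ^ (k + 1 + 1 + 1) * f ^ (m + 2 - (k + 1 + 1 + 1)) * (m + 2).choose (k + 1 + 1 + 1) :=
    dvd_sum fun k _ => by
      refine Dvd.dvd.mul_right (Dvd.dvd.mul_right ?_ _) _
      rw [neg_pow]
      exact Dvd.dvd.mul_left (pow_dvd_pow g (by lia)) _
  convert htail using 1
  rw [sub_eq_neg_add f g, add_pow, sum_range_succ', sum_range_succ', sum_range_succ']
  simp only [zero_add, Nat.reduceAdd, Nat.reduceSubDiff, Nat.add_one_sub_one, add_tsub_cancel_right,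
    tsub_zero, even_two, Even.neg_pow, pow_zero, pow_one, Nat.choose_zero_right,
    Nat.choose_one_right, Nat.cast_one, Nat.cast_add, Nat.cast_ofNat, neg_mul, one_mul, mul_one,
    nsmul_eq_mul]
  ring

theorem coeff_two_mul_sub_pow {R : Type*} [CommRing R] {f : PowerSeries R}
    (hf : PowerSeries.constantCoeff f = 0) {d : ℕ} (hd : 0 < d) (a : R) (M : PowerSeries R)
    (m : ℕ) :
    coeff (2 * d)
        ((f - PowerSeries.X ^ d * (PowerSeries.C a + PowerSeries.X ^ d * M)) ^ (m + 2)) =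
      coeff (2 * d) (f ^ (m + 2)) - (m + 2) * (a * coeff d (f ^ (m + 1))) +
        if m = 0 then a ^ 2 else 0 := by
  set u := PowerSeries.C a + PowerSeries.X ^ d * M
  have hu : PowerSeries.constantCoeff u = a := by simp [u, hd.ne']
  obtain ⟨w, hw⟩ := cube_dvd_sub_pow_sub f (PowerSeries.X ^ d * u) m
  have hlinear : coeff (2 * d) (f ^ (m + 1) * (PowerSeries.X ^ d * u)) =
      a * coeff d (f ^ (m + 1)) := by
    have hfactor : f ^ (m + 1) * (PowerSeries.X ^ d * u) = PowerSeries.X ^ d *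
        (PowerSeries.C a * f ^ (m + 1) + PowerSeries.X ^ d * (M * f ^ (m + 1))) := by
      simp only [u]
      ring
    rw [hfactor, two_mul, PowerSeries.coeff_X_pow_mul, map_add, PowerSeries.coeff_C_mul,
      PowerSeries.coeff_X_pow_mul', if_pos le_rfl, Nat.sub_self]
    simp [hf]
  have hquadratic : coeff (2 * d) (f ^ m * (PowerSeries.X ^ d * u) ^ 2) =
      if m = 0 then a ^ 2 else 0 := by
    rw [mul_pow, ← pow_mul', mul_left_comm, PowerSeries.coeff_X_pow_mul', if_pos le_rfl,
      Nat.sub_self, PowerSeries.coeff_zero_eq_constantCoeff_apply, map_mul, map_pow, map_pow, hf,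
      hu, zero_pow_eq, ite_mul, one_mul, zero_mul]
  have hcubic : coeff (2 * d) ((PowerSeries.X ^ d * u) ^ 3 * w) = 0 := by
    rw [mul_pow, ← pow_mul', mul_assoc, PowerSeries.coeff_X_pow_mul', if_neg (by lia)]
  rw [sub_eq_iff_eq_add.1 hw, map_add, map_add, map_sub, map_nsmul, map_nsmul, hlinear, hquadratic,
    hcubic, zero_add]
  split_ifs with hm
  · subst hm
    simp
  · simp

theorem hsum_two_mul {p : ℕ} (hp : 0 < p) (m : ℕ) :
    hsum p (m + 2) (2 * p) = (m + 2).factorial / 2 *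
      ((p * (recipPoly ((Ico 1 (2 * p)).erase p)).coeff (m + 1) +
        ((recipPoly ((Ico 1 (2 * p)).erase p)).coeff m - 2 * (recipPoly (Ico 1 p)).coeff m +
          if m = 0 then 1 else 0)) / p ^ 2) := by
  obtain ⟨M, hM⟩ := exists_negLogOneSubCoprime_eq hp
  have hinsert := recipPoly.coeff_succ_insert (notMem_erase p (Ico 1 (2 * p))) m
  rw [insert_erase (mem_Ico.2 ⟨hp, by lia⟩)] at hinsert
  rw [hsum_eq_coeff, hM, coeff_two_mul_sub_pow constantCoeff_negLogOneSub hp,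
    coeff_negLogOneSub_pow, coeff_negLogOneSub_pow, hinsert, Nat.factorial_succ (m + 1)]
  have hp0 : (p : ℚ) ≠ 0 := by positivity
  split_ifs with hm
  · subst hm
    push_cast
    field_simp
    norm_num
    ring
  · push_cast
    field_simp
    ring

end Logarithm

theorem hsum_zero_of_pos (p : ℕ) {N : ℕ} (hN : 0 < N) : hsum p 0 N = 0 := by
  rw [hsum_eq_coeff, pow_zero, PowerSeries.coeff_one, if_neg hN.ne']

section Congruence

variable {p : ℕ} [Fact p.Prime] {m : ℕ}

theorem sum_filter_odd_bernoulli_mul_bernoulli (hm : m + 2 < p) :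
    ∑ a ∈ (Icc 2 m).filter (fun a => Odd a),
        bernoulli (p - a) * bernoulli (p - (m + 2) + a) / ((a : ℚ) * ((m + 2 : ℕ) - a)) =
      ∑ i ∈ Ico 1 m, glaisherQuotient p i * glaisherQuotient p (m - i) := by
  have hterm : ∀ i ∈ Ico 1 m, glaisherQuotient p i * glaisherQuotient p (m - i) =
      bernoulli (p - (i + 1)) * bernoulli (p - (m + 2) + (i + 1)) /
        (((i + 1 : ℕ) : ℚ) * ((m + 2 : ℕ) - (i + 1 : ℕ))) := by
    intro i hi
    have hi := mem_Ico.1 hi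
    rw [glaisherQuotient, glaisherQuotient, div_mul_div_comm, Nat.sub_sub, add_comm 1 i,
      show p - 1 - (m - i) = p - (m + 2) + (i + 1) by lia, Nat.cast_sub hi.2.le]
    push_cast
    ring
  have hodd : ∀ i ∈ Ico 1 m, glaisherQuotient p i * glaisherQuotient p (m - i) ≠ 0 →
      Odd (i + 1) := by
    intro i hi hne
    have hi := mem_Ico.1 hi
    by_contra hi_odd
    refine hne ?_
    rw [glaisherQuotient_eq_zero_of_odd (by grind) (by lia), zero_mul]
  rw [← sum_filter_of_ne hodd]
  refine (sum_bij' (fun i _ => i + 1) (fun a _ => a - 1) ?_ ?_ ?_ ?_ ?_).symm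
  all_goals grind

theorem hsum_two_mul_sub_mem (heven : Even m) (hm : m + 4 < p) :
    hsum p (m + 2) (2 * p) - (m + 2).factorial / 2 *
      ∑ i ∈ Ico 1 m, glaisherQuotient p i * glaisherQuotient p (m - i) ∈
        padicFiltration p 1 := by
  have hp : p.Prime := Fact.out
  have hfactor : ((m + 2).factorial / 2 : ℚ) ∈ padicFiltration p 0 :=
    padicFiltration.mul_mem_of_left (padicFiltration.natCast_mem _)
      (padicFiltration.inv_natCast_mem (Nat.not_dvd_of_pos_of_lt two_pos (by lia)))
  have hcoeffs := add_mem
    (padicFiltration.mul_mem padicFiltration.self_mem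
      (coeff_recipPoly_erase_mem_two (p := p) heven.add_one (by lia)))
    (coeff_recipPoly_erase_sub_mem_three (p := p) heven (by lia))
  have h := padicFiltration.mul_mem_of_left hfactor
    (padicFiltration.mul_mem hcoeffs (padicFiltration.zpow_self_mem (-2)))
  rw [show (1 + 2 + -2 : ℤ) = 1 by norm_num] at h
  rw [hsum_two_mul hp.pos]
  convert h using 1
  have hp0 : (p : ℚ) ≠ 0 := Nat.cast_ne_zero.2 hp.ne_zero
  rw [zpow_neg, zpow_ofNat]
  field_simp
  ring

end Congruence

end

theorem stmt_9 (p n : ℕ) (hn : Even n) (hp : p.Prime) (hpn : n + 2 < p) :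
    ratCong p 1 (hsum p n (2 * p))
      ((Nat.factorial n : ℚ) / 2 *
        ∑ a ∈ (Finset.Icc 2 (n - 2)).filter (fun a => Odd a),
          bernoulli (p - a) * bernoulli (p - n + a) / ((a : ℚ) * (n - a))) := by
  have := Fact.mk hp
  rw [ratCong_iff_sub_mem]
  obtain rfl | rfl | ⟨m, rfl⟩ : n = 0 ∨ n = 1 ∨ ∃ m, n = m + 2 := by
    obtain _ | _ | m := n <;> simp
  · simp [hsum_zero_of_pos p (Nat.mul_pos two_pos hp.pos)]
  · exact absurd hn Nat.not_even_one
  · rw [Nat.add_sub_cancel, sum_filter_odd_bernoulli_mul_bernoulli (by lia)]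
    exact hsum_two_mul_sub_mem ((Nat.even_add.1 hn).2 even_two) hpn
end
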